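/- arXiv:1902.08264 — 13 statements merged into one kernel-verified Lean document; each statement's English description precedes it below -/
import Mathlib

section
/- Let U ⊆ V be an isotropic subspace and let A ∈ O(V) satisfy A(w) = w for every w ∈ U^⊥. Then for every v ∈ V the vector A(v) − v lies in U, and the bilinear map (v, v') ↦ (A(v) − v, v') is anti-symmetric, i.e. (A(v) − v, v') + (v, A(v') − v') = 0 for all v, v' ∈ V. -/
/-- The subspace orthogonal to `U` with respect to the bilinear form `Φ`. -/
def perp {V : Type*} [AddCommGroup V] [Module ℚ V]
    (Φ : V →ₗ[ℚ] V →ₗ[ℚ] ℚ) (U : Submodule ℚ V) : Submodule ℚ V where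
  carrier := {v | ∀ u ∈ U, Φ u v = 0}
  add_mem' := by
    intro a b ha hb u hu
    simp only [Set.mem_setOf_eq] at ha hb ⊢
    rw [map_add, ha u hu, hb u hu, add_zero]
  zero_mem' := by
    intro u _
    exact map_zero (Φ u)
  smul_mem' := by
    intro c a ha u hu
    simp only [Set.mem_setOf_eq] at ha ⊢
    rw [map_smul, ha u hu, smul_zero]

/-- If `U` is isotropic and `A ∈ O(V)` fixes `U^⊥` pointwise, then
`A(v) − v ∈ U` for every `v`, and the bilinear map `(v, v') ↦ (A(v) − v, v')` is
anti-symmetric. -/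
theorem stmt2 {V : Type*} [AddCommGroup V] [Module ℚ V] [FiniteDimensional ℚ V]
    (Φ : V →ₗ[ℚ] V →ₗ[ℚ] ℚ)
    (hsymm : ∀ v w : V, Φ v w = Φ w v)
    (hnd : ∀ v : V, (∀ w : V, Φ v w = 0) → v = 0)
    (U : Submodule ℚ V)
    (hUiso : ∀ u ∈ U, ∀ u' ∈ U, Φ u u' = 0)
    (A : V ≃ₗ[ℚ] V) (hA : ∀ v w : V, Φ (A v) (A w) = Φ v w)
    (hfix : ∀ w ∈ perp Φ U, A w = w) :
    (∀ v : V, A v - v ∈ U) ∧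
    (∀ v v' : V, Φ (A v - v) v' + Φ v (A v' - v') = 0) := by
  have h1 : ∀ v : V, A v - v ∈ U := by
    intro v
    have hr : LinearMap.BilinForm.IsRefl Φ := by
      intro x y h
      rw [hsymm]
      exact h
    have hn : LinearMap.BilinForm.Nondegenerate Φ := by
      refine ⟨hnd, ?_⟩
      intro y h
      exact hnd y (fun w => by rw [hsymm]; exact h w)
    rw [← LinearMap.BilinForm.orthogonal_orthogonal hn hr U]
    rw [LinearMap.BilinForm.mem_orthogonal_iff]
    intro w hw
    have hw' : w ∈ perp Φ U := fun u hu => hw u hu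
    have h2 := hA w v
    rw [hfix w hw'] at h2
    change Φ w (A v - v) = 0
    rw [map_sub, h2, sub_self]
  refine ⟨h1, ?_⟩
  intro v v'
  have h2 := hUiso _ (h1 v) _ (h1 v')
  have h3 := hA v v'
  simp only [map_sub, LinearMap.sub_apply] at h2 ⊢
  linarith
end

section
/- Let U ⊆ V be an isotropic subspace, and let A, B ∈ O(V) satisfy: A(u) = u and B(u) = u for all u ∈ U, and A(w) − w ∈ U and B(w) − w ∈ U for all w ∈ U^⊥. Then the commutator C = A∘B∘A⁻¹∘B⁻¹ fixes U^⊥ pointwise, and for every v ∈ V one has v − C(v) = B(A(v)) − A(B(v)), a vector lying in U. -/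
/-- If `U` is isotropic and `A, B ∈ O(V)` fix `U` pointwise and
shift `U^⊥` by elements of `U`, then the commutator `C = A∘B∘A⁻¹∘B⁻¹` fixes `U^⊥`
pointwise, and `v − C(v) = B(A(v)) − A(B(v)) ∈ U` for every `v ∈ V`. -/
theorem stmt4 {V : Type*} [AddCommGroup V] [Module ℚ V] [FiniteDimensional ℚ V]
    (Φ : V →ₗ[ℚ] V →ₗ[ℚ] ℚ)
    (hsymm : ∀ v w : V, Φ v w = Φ w v)
    (hnd : ∀ v : V, (∀ w : V, Φ v w = 0) → v = 0)
    (U : Submodule ℚ V)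
    (hUiso : ∀ u ∈ U, ∀ u' ∈ U, Φ u u' = 0)
    (A B : V ≃ₗ[ℚ] V)
    (hA : ∀ v w : V, Φ (A v) (A w) = Φ v w)
    (hB : ∀ v w : V, Φ (B v) (B w) = Φ v w)
    (hAU : ∀ u ∈ U, A u = u) (hBU : ∀ u ∈ U, B u = u)
    (hAperp : ∀ w ∈ perp Φ U, A w - w ∈ U)
    (hBperp : ∀ w ∈ perp Φ U, B w - w ∈ U) :
    (∀ w ∈ perp Φ U, A (B (A.symm (B.symm w))) = w) ∧
    (∀ v : V, v - A (B (A.symm (B.symm v))) = B (A v) - A (B v) ∧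
      B (A v) - A (B v) ∈ U) := by
  have pA : ∀ v, A v - v ∈ perp Φ U := by
    intro v u hu
    have h := hA u v
    rw [hAU u hu] at h
    rw [map_sub, h, sub_self]
  have pB : ∀ v, B v - v ∈ perp Φ U := by
    intro v u hu
    have h := hB u v
    rw [hBU u hu] at h
    rw [map_sub, h, sub_self]
  have comm : ∀ w ∈ perp Φ U, B (A w) - A (B w) = 0 := by
    intro w hw
    have h1 := hBU _ (hAperp w hw)
    have h2 := hAU _ (hBperp w hw)
    rw [map_sub] at h1 h2
    rw [sub_eq_iff_eq_add.mp h1, sub_eq_iff_eq_add.mp h2]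
    abel
  have main : ∀ v : V, v - A (B (A.symm (B.symm v))) = B (A v) - A (B v) := by
    intro v
    obtain ⟨x, rfl⟩ : ∃ x, v = B (A x) := ⟨A.symm (B.symm v), by simp⟩
    have hp : B (A x) - x ∈ perp Φ U := by
      have h := (perp Φ U).add_mem (pB (A x)) (pA x)
      rwa [sub_add_sub_cancel] at h
    have h := comm _ hp
    simp only [map_sub] at h
    simp only [LinearEquiv.symm_apply_apply]
    rw [← sub_eq_zero, ← neg_eq_zero, ← h]
    abel
  refine ⟨fun w hw => ?_, fun v => ⟨main v, ?_⟩⟩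
  · have h := main w
    rw [comm w hw] at h
    exact (sub_eq_zero.mp h).symm
  · have h := U.sub_mem (hBperp _ (pA v)) (hAperp _ (pB v))
    simp only [map_sub] at h
    convert h using 1
    abel
end

section
/- Let U ⊆ V be an isotropic subspace and let Ũ be a subspace of V complementary to U^⊥, i.e. U^⊥ ∩ Ũ = {0} and U^⊥ + Ũ = V. Then there exists a unique ℚ-linear map α : Ũ → U such that α is symmetric, i.e. (α(ũ), ṽ) = (ũ, α(ṽ)) for all ũ, ṽ ∈ Ũ, and the subspace {ũ − α(ũ) : ũ ∈ Ũ} is isotropic, i.e. (ũ − α(ũ), ṽ − α(ṽ)) = 0 for all ũ, ṽ ∈ Ũ. -/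
/-- If `U` is isotropic and `Ũ` is a complement of `U^⊥` in `V`,
then there is a unique symmetric linear map `α : Ũ → U` such that
`{ũ − α(ũ) : ũ ∈ Ũ}` is isotropic. -/
theorem stmt5 {V : Type*} [AddCommGroup V] [Module ℚ V] [FiniteDimensional ℚ V]
    (Φ : V →ₗ[ℚ] V →ₗ[ℚ] ℚ)
    (hsymm : ∀ v w : V, Φ v w = Φ w v)
    (hnd : ∀ v : V, (∀ w : V, Φ v w = 0) → v = 0)
    (U Ut : Submodule ℚ V)
    (hUiso : ∀ u ∈ U, ∀ u' ∈ U, Φ u u' = 0)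
    (hdisj : perp Φ U ⊓ Ut = ⊥) (hcompl : perp Φ U ⊔ Ut = ⊤) :
    ∃! α : ↥Ut →ₗ[ℚ] V,
      (∀ x : ↥Ut, α x ∈ U) ∧
      (∀ x y : ↥Ut, Φ (α x) (y : V) = Φ (x : V) (α y)) ∧
      (∀ x y : ↥Ut, Φ ((x : V) - α x) ((y : V) - α y) = 0) := by
  have hext : ∀ u ∈ U, (∀ y : ↥Ut, Φ u (y : V) = 0) → u = 0 := by
    intro u hu h
    apply hnd
    intro w
    have hw : w ∈ perp Φ U ⊔ Ut := by rw [hcompl]; trivial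
    obtain ⟨a, ha, b, hb, rfl⟩ := Submodule.mem_sup.1 hw
    have h1 : Φ u a = 0 := ha u hu
    have h2 : Φ u b = 0 := h ⟨b, hb⟩
    rw [map_add, h1, h2, add_zero]
  let P : ↥U →ₗ[ℚ] Module.Dual ℚ ↥Ut := Φ.domRestrict₁₂ U Ut
  let Q : ↥Ut →ₗ[ℚ] Module.Dual ℚ ↥U := Φ.domRestrict₁₂ Ut U
  let R : ↥Ut →ₗ[ℚ] Module.Dual ℚ ↥Ut := Φ.domRestrict₁₂ Ut Ut
  have hP : Function.Injective P := by
    rw [injective_iff_map_eq_zero]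
    intro u hu
    exact Subtype.ext (hext u u.2 fun y => LinearMap.congr_fun hu y)
  have hQ : Function.Injective Q := by
    rw [injective_iff_map_eq_zero]
    intro x hx
    have hx' : (x : V) ∈ perp Φ U ⊓ Ut := by
      refine ⟨fun u hu => ?_, x.2⟩
      rw [hsymm]
      exact LinearMap.congr_fun hx (⟨u, hu⟩ : ↥U)
    rw [hdisj] at hx'
    exact Subtype.ext ((Submodule.mem_bot ℚ).1 hx')
  have hdim : Module.finrank ℚ ↥U = Module.finrank ℚ (Module.Dual ℚ ↥Ut) := by
    have h1 := LinearMap.finrank_le_finrank_of_injective hP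
    have h2 := LinearMap.finrank_le_finrank_of_injective hQ
    rw [Subspace.dual_finrank_eq] at h1 h2 ⊢
    omega
  let e := LinearEquiv.ofInjectiveOfFinrankEq P hP hdim
  have he : ∀ f, P (e.symm f) = f := fun f => e.apply_symm_apply f
  let α : ↥Ut →ₗ[ℚ] V := (1 / 2 : ℚ) • (U.subtype ∘ₗ e.symm.toLinearMap ∘ₗ R)
  have hαU : ∀ x, α x ∈ U := fun x => U.smul_mem _ (e.symm (R x)).2
  have hα : ∀ x y : ↥Ut, Φ (α x) (y : V) = (1 / 2 : ℚ) * Φ (x : V) (y : V) := by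
    intro x y
    have h : Φ (e.symm (R x) : V) (y : V) = Φ (x : V) (y : V) :=
      LinearMap.congr_fun (he (R x)) y
    change Φ ((1 / 2 : ℚ) • (e.symm (R x) : V)) (y : V) = _
    rw [map_smul, LinearMap.smul_apply, h, smul_eq_mul]
  refine ⟨α, ⟨hαU, ?_, ?_⟩, ?_⟩
  · intro x y
    rw [hsymm x (α y), hα, hα, hsymm x y]
  · intro x y
    simp only [map_sub, LinearMap.sub_apply]
    rw [hsymm x (α y), hα, hα, hUiso _ (hαU x) _ (hαU y), hsymm y x]
    ring
  · rintro β ⟨hβU, hβs, hβ⟩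
    ext x
    rw [← sub_eq_zero]
    apply hext _ (U.sub_mem (hβU x) (hαU x))
    intro y
    have h := hβ x y
    simp only [map_sub, LinearMap.sub_apply] at h ⊢
    rw [← hβs x y, hUiso _ (hβU x) _ (hβU y)] at h
    rw [hα]
    linarith
end

section
/- Let U ⊆ V be an isotropic subspace, Ũ a subspace complementary to U^⊥ (U^⊥ ∩ Ũ = {0}, U^⊥ + Ũ = V), and W̃ = (U + Ũ)^⊥. Let G = {A ∈ O(V) : A(U) = U and A(U + Ũ) = U + Ũ}. Then every A ∈ G satisfies A(W̃) = W̃, the map G → GL(U) × O(W̃) sending A to (A|_U, A|_{W̃}) (where O(W̃) is the group of linear automorphisms of W̃ preserving the restricted bilinear form) is a surjective group homomorphism, and its kernel consists exactly of the maps v ↦ v − η(v) for ℚ-linear maps η : V → U vanishing on U^⊥ and satisfying (η(v), v') = −(v, η(v')) for all v, v' ∈ V. -/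
lemma perp_decomp {V : Type*} [AddCommGroup V] [Module ℚ V] [FiniteDimensional ℚ V]
    (Φ : V →ₗ[ℚ] V →ₗ[ℚ] ℚ)
    (hsymm : ∀ v w : V, Φ v w = Φ w v)
    (hnd : ∀ v : V, (∀ w : V, Φ v w = 0) → v = 0)
    (U Ut : Submodule ℚ V)
    (hdisj : perp Φ U ⊓ Ut = ⊥) (hcompl : perp Φ U ⊔ Ut = ⊤) :
    ∃ (d : U ≃ₗ[ℚ] Module.Dual ℚ Ut) (e : Ut ≃ₗ[ℚ] Module.Dual ℚ U),
      (∀ u t, d u t = Φ (u : V) (t : V)) ∧ (∀ t u, e t u = Φ (u : V) (t : V)) := by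
  let d : U →ₗ[ℚ] Module.Dual ℚ Ut := Φ.domRestrict₁₂ U Ut
  let e : Ut →ₗ[ℚ] Module.Dual ℚ U := d.flip
  have hd : ∀ u t, d u t = Φ (u : V) (t : V) := fun u t => rfl
  have he : ∀ t u, e t u = Φ (u : V) (t : V) := fun u t => rfl
  have id : Function.Injective d := by
    rw [← LinearMap.ker_eq_bot, LinearMap.ker_eq_bot']
    intro u hu
    apply Subtype.ext
    apply hnd
    intro w
    have hw : w ∈ perp Φ U ⊔ Ut := by rw [hcompl]; trivial
    obtain ⟨p, hp, t, ht, rfl⟩ := Submodule.mem_sup.1 hw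
    have h1 := hp u u.2
    have h2 := hd u ⟨t, ht⟩
    rw [hu] at h2
    rw [map_add, h1, ← h2]; simp
  have ie : Function.Injective e := by
    rw [← LinearMap.ker_eq_bot, LinearMap.ker_eq_bot']
    intro t h
    apply Subtype.ext
    have : (t : V) ∈ perp Φ U ⊓ Ut := by
      refine ⟨fun u hu => ?_, t.2⟩
      have h2 := he t ⟨u, hu⟩
      rw [h] at h2
      simpa using h2.symm
    rw [hdisj] at this
    simpa using this
  have f1 := LinearMap.finrank_le_finrank_of_injective id
  have f2 := LinearMap.finrank_le_finrank_of_injective ie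
  rw [Subspace.dual_finrank_eq] at f1 f2
  have f : Module.finrank ℚ U = Module.finrank ℚ Ut := le_antisymm f1 f2
  refine ⟨LinearEquiv.ofInjectiveOfFinrankEq d id (by rw [Subspace.dual_finrank_eq, f]),
    LinearEquiv.ofInjectiveOfFinrankEq e ie (by rw [Subspace.dual_finrank_eq, f]), ?_, ?_⟩
  · intro u t; exact hd u t
  · intro u t; exact he u t

/-- Let `U` be isotropic, `Ũ` a complement of `U^⊥`, and
`W̃ = (U + Ũ)^⊥`, and let `G = {A ∈ O(V) : A(U) = U, A(U + Ũ) = U + Ũ}`. Then every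
`A ∈ G` satisfies `A(W̃) = W̃`; the assignment `A ↦ (A|_U, A|_W̃)` lands in
`GL(U) × O(W̃)`, is multiplicative (a group homomorphism), and is surjective onto
`GL(U) × O(W̃)`; and its kernel consists exactly of the maps `v ↦ v − η(v)` for
linear `η : V → U` vanishing on `U^⊥` with `(η v, v') = −(v, η v')`. -/
theorem stmt6 {V : Type*} [AddCommGroup V] [Module ℚ V] [FiniteDimensional ℚ V]
    (Φ : V →ₗ[ℚ] V →ₗ[ℚ] ℚ)
    (hsymm : ∀ v w : V, Φ v w = Φ w v)
    (hnd : ∀ v : V, (∀ w : V, Φ v w = 0) → v = 0)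
    (U Ut : Submodule ℚ V)
    (hUiso : ∀ u ∈ U, ∀ u' ∈ U, Φ u u' = 0)
    (hdisj : perp Φ U ⊓ Ut = ⊥) (hcompl : perp Φ U ⊔ Ut = ⊤) :
    -- (a) every A ∈ G preserves W̃ = (U + Ũ)^⊥
    (∀ A : V ≃ₗ[ℚ] V, (∀ v w : V, Φ (A v) (A w) = Φ v w) →
      Submodule.map A.toLinearMap U = U →
      Submodule.map A.toLinearMap (U ⊔ Ut) = U ⊔ Ut →
      Submodule.map A.toLinearMap (perp Φ (U ⊔ Ut)) = perp Φ (U ⊔ Ut)) ∧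
    -- (b) A restricts to an element of GL(U) and to an element of O(W̃)
    (∀ A : V ≃ₗ[ℚ] V, (∀ v w : V, Φ (A v) (A w) = Φ v w) →
      Submodule.map A.toLinearMap U = U →
      Submodule.map A.toLinearMap (U ⊔ Ut) = U ⊔ Ut →
      ∃ (M : ↥U ≃ₗ[ℚ] ↥U)
        (γ : ↥(perp Φ (U ⊔ Ut)) ≃ₗ[ℚ] ↥(perp Φ (U ⊔ Ut))),
        (∀ x y : ↥(perp Φ (U ⊔ Ut)), Φ (γ x : V) (γ y : V) = Φ (x : V) (y : V)) ∧
        (∀ u : ↥U, (M u : V) = A (u : V)) ∧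
        (∀ x : ↥(perp Φ (U ⊔ Ut)), (γ x : V) = A (x : V))) ∧
    -- (c) the assignment A ↦ (A|_U, A|_W̃) is multiplicative, i.e. a group hom
    (∀ A₁ A₂ : V ≃ₗ[ℚ] V, ∀ M₁ M₂ : ↥U ≃ₗ[ℚ] ↥U,
      ∀ γ₁ γ₂ : ↥(perp Φ (U ⊔ Ut)) ≃ₗ[ℚ] ↥(perp Φ (U ⊔ Ut)),
      (∀ u : ↥U, (M₁ u : V) = A₁ (u : V)) →
      (∀ u : ↥U, (M₂ u : V) = A₂ (u : V)) →
      (∀ x : ↥(perp Φ (U ⊔ Ut)), (γ₁ x : V) = A₁ (x : V)) →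
      (∀ x : ↥(perp Φ (U ⊔ Ut)), (γ₂ x : V) = A₂ (x : V)) →
      (∀ u : ↥U, ((M₂.trans M₁) u : V) = (A₂.trans A₁) (u : V)) ∧
      (∀ x : ↥(perp Φ (U ⊔ Ut)), ((γ₂.trans γ₁) x : V) = (A₂.trans A₁) (x : V))) ∧
    -- (d) surjectivity onto GL(U) × O(W̃)
    (∀ (M : ↥U ≃ₗ[ℚ] ↥U) (γ : ↥(perp Φ (U ⊔ Ut)) ≃ₗ[ℚ] ↥(perp Φ (U ⊔ Ut))),
      (∀ x y : ↥(perp Φ (U ⊔ Ut)), Φ (γ x : V) (γ y : V) = Φ (x : V) (y : V)) →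
      ∃ A : V ≃ₗ[ℚ] V, (∀ v w : V, Φ (A v) (A w) = Φ v w) ∧
        Submodule.map A.toLinearMap U = U ∧
        Submodule.map A.toLinearMap (U ⊔ Ut) = U ⊔ Ut ∧
        (∀ u : ↥U, A (u : V) = (M u : V)) ∧
        (∀ x : ↥(perp Φ (U ⊔ Ut)), A (x : V) = (γ x : V))) ∧
    -- (e) kernel description
    (∀ A : V ≃ₗ[ℚ] V, (∀ v w : V, Φ (A v) (A w) = Φ v w) →
      Submodule.map A.toLinearMap U = U →
      Submodule.map A.toLinearMap (U ⊔ Ut) = U ⊔ Ut →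
      (((∀ u ∈ U, A u = u) ∧ (∀ x ∈ perp Φ (U ⊔ Ut), A x = x)) ↔
        ∃ η : V →ₗ[ℚ] V, (∀ v : V, η v ∈ U) ∧ (∀ x ∈ perp Φ U, η x = 0) ∧
          (∀ v v' : V, Φ (η v) v' = - Φ v (η v')) ∧ (∀ v : V, A v = v - η v))) := by
  obtain ⟨d, e, hd, he⟩ := perp_decomp Φ hsymm hnd U Ut hdisj hcompl
  have hWU : ∀ x ∈ perp Φ (U ⊔ Ut), ∀ u ∈ U, Φ u x = 0 :=
    fun x hx u hu => hx u (Submodule.mem_sup_left hu)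
  have hWT : ∀ x ∈ perp Φ (U ⊔ Ut), ∀ u ∈ Ut, Φ u x = 0 :=
    fun x hx u hu => hx u (Submodule.mem_sup_right hu)
  -- projections
  let pt : V →ₗ[ℚ] Ut := e.symm.toLinearMap ∘ₗ (Φ.domRestrict U).flip
  have hpt : ∀ v, ∀ u ∈ U, Φ u (pt v) = Φ u v := by
    intro v u hu
    have := he (pt v) ⟨u, hu⟩
    rw [← this]
    simp [pt]
  let q : V →ₗ[ℚ] V := LinearMap.id - Ut.subtype ∘ₗ pt
  have hq : ∀ v, q v = v - pt v := fun v => rfl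
  let pu : V →ₗ[ℚ] U := d.symm.toLinearMap ∘ₗ (Φ.domRestrict₂ Ut) ∘ₗ q
  have hpu : ∀ v, ∀ t ∈ Ut, Φ (pu v) t = Φ (v - pt v) t := by
    intro v t ht
    have := hd (pu v) ⟨t, ht⟩
    rw [← hq, ← this]
    simp [pu]
    rfl
  let pw : V →ₗ[ℚ] perp Φ (U ⊔ Ut) :=
    LinearMap.codRestrict _ (q - U.subtype ∘ₗ pu) (by
      intro v h hh
      obtain ⟨u, hu, t, ht, rfl⟩ := Submodule.mem_sup.1 hh
      have h1 := hpt v u hu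
      have h2 := hpu v t ht
      have h3 := hUiso u hu (pu v) (pu v).2
      rw [hsymm] at h2
      rw [hsymm _ t] at h2
      simp only [LinearMap.sub_apply, hq, LinearMap.comp_apply, Submodule.subtype_apply, map_add,
        map_sub, LinearMap.add_apply] at *
      linarith)
  have hdec : ∀ v, v = pu v + pt v + pw v := by
    intro v
    have : (pw v : V) = v - pt v - pu v := rfl
    rw [this]; abel
  have hptU : ∀ x ∈ perp Φ U, pt x = 0 := by
    intro x hx
    apply e.injective
    ext u
    rw [he, hpt x u u.2, hx u u.2]; simp
  have hUp : ∀ u ∈ U, u ∈ perp Φ U := fun u hu u' hu' => hUiso u' hu' u hu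
  have hWp : ∀ u ∈ perp Φ (U ⊔ Ut), u ∈ perp Φ U := fun u hu => hWU u hu
  have hpuU : ∀ u : U, pu u = u := by
    intro u
    apply d.injective
    ext t
    rw [hd, hd, hpu u t t.2, hptU u (hUp u u.2)]; simp
  have hpuW : ∀ x : perp Φ (U ⊔ Ut), pu x = 0 := by
    intro x
    apply d.injective
    ext t
    rw [hd, hpu x t t.2, hptU x (hWp x x.2), hsymm]
    simpa using hWT x x.2 t t.2
  have hpwU : ∀ u : U, pw u = 0 := by
    intro u
    have := hdec u
    rw [hpuU, hptU u (hUp u u.2)] at this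
    apply Subtype.ext
    simpa using this
  have hpwW : ∀ x : perp Φ (U ⊔ Ut), pw x = x := by
    intro x
    have := hdec x
    rw [hpuW, hptU x (hWp x x.2)] at this
    apply Subtype.ext
    simpa using this.symm
  have ha : ∀ A : V ≃ₗ[ℚ] V, (∀ v w : V, Φ (A v) (A w) = Φ v w) →
      Submodule.map A.toLinearMap U = U →
      Submodule.map A.toLinearMap (U ⊔ Ut) = U ⊔ Ut →
      Submodule.map A.toLinearMap (perp Φ (U ⊔ Ut)) = perp Φ (U ⊔ Ut) := by
    intro A hA h1 h2
    apply Submodule.eq_of_le_of_finrank_eq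
    · rintro _ ⟨x, hx, rfl⟩ h hh
      rw [← h2] at hh
      obtain ⟨h', hh', rfl⟩ := hh
      exact (hA h' x).trans (hx h' hh')
    · exact LinearEquiv.finrank_map_eq A _
  refine ⟨ha, ?_, ?_, ?_, ?_⟩
  · intro A hA h1 h2
    exact ⟨A.ofSubmodules U U h1, A.ofSubmodules _ _ (ha A hA h1 h2),
      fun x y => hA x y, fun u => rfl, fun x => rfl⟩
  · intro A₁ A₂ M₁ M₂ γ₁ γ₂ h1 h2 h3 h4
    constructor
    · intro u; simp [h1, h2]
    · intro u; simp [h3, h4]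
  · intro M γ hγ
    -- adjoint-inverse of M on Ut
    let M' : Ut ≃ₗ[ℚ] Ut := e.trans (M.symm.dualMap.trans e.symm)
    have hM' : ∀ (u : U) (t : Ut), Φ (M u : V) (M' t : V) = Φ (u : V) (t : V) := by
      intro u t
      rw [← he, ← he]
      simp [M']
    let β : Ut →ₗ[ℚ] Module.Dual ℚ Ut :=
      (2⁻¹ : ℚ) • ((Φ.domRestrict₁₂ Ut Ut).compl₂ M'.symm.toLinearMap
        - (Φ.domRestrict₁₂ Ut Ut) ∘ₗ M'.toLinearMap)
    let s : Ut →ₗ[ℚ] U := d.symm.toLinearMap ∘ₗ β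
    have hs : ∀ t t' : Ut, Φ (s t : V) (M' t' : V)
        = 2⁻¹ * (Φ (t : V) (t' : V) - Φ (M' t : V) (M' t' : V)) := by
      intro t t'
      rw [← hd]
      simp [s, β]
      rfl
    let B : V →ₗ[ℚ] V := U.subtype ∘ₗ M.toLinearMap ∘ₗ pu + Ut.subtype ∘ₗ M'.toLinearMap ∘ₗ pt
      + U.subtype ∘ₗ s ∘ₗ pt + (perp Φ (U ⊔ Ut)).subtype ∘ₗ γ.toLinearMap ∘ₗ pw
    have hB : ∀ v, B v = M (pu v) + M' (pt v) + s (pt v) + γ (pw v) := fun v => rfl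
    have hBi : ∀ v w, Φ (B v) (B w) = Φ v w := by
      intro v w
      conv_rhs => rw [hdec v, hdec w]
      rw [hB, hB]
      generalize pu v = a
      generalize pt v = b
      generalize pw v = c
      generalize pu w = a'
      generalize pt w = b'
      generalize pw w = c'
      have UU : ∀ x y : U, Φ (x : V) (y : V) = 0 := fun x y => hUiso x x.2 y y.2
      have UW : ∀ (x : U) (y : perp Φ (U ⊔ Ut)), Φ (x : V) (y : V) = 0 :=
        fun x y => hWU y y.2 x x.2
      have TW : ∀ (x : Ut) (y : perp Φ (U ⊔ Ut)), Φ (x : V) (y : V) = 0 :=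
        fun x y => hWT y y.2 x x.2
      have WU : ∀ (x : U) (y : perp Φ (U ⊔ Ut)), Φ (y : V) (x : V) = 0 :=
        fun x y => (hsymm _ _).trans (UW x y)
      have WT : ∀ (x : Ut) (y : perp Φ (U ⊔ Ut)), Φ (y : V) (x : V) = 0 :=
        fun x y => (hsymm _ _).trans (TW x y)
      have e1 := hM' a b'
      have e2 := hM' a' b
      have e3 := hs b b'
      have e4 := hs b' b
      rw [hsymm (M' b' : V), hsymm (b' : V)] at e4
      rw [hsymm _ (M' b : V), hsymm _ (b : V)] at e2
      rw [hsymm _ (M' b : V)] at e4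
      simp only [map_add, LinearMap.add_apply, UU, UW, TW, WU, WT, hγ, e1, e2, e3, e4]
      ring
    have hinj : Function.Injective B := by
      rw [← LinearMap.ker_eq_bot, LinearMap.ker_eq_bot']
      intro v hv
      apply hnd
      intro w
      rw [← hBi, hv]; simp
    let A := LinearEquiv.ofInjectiveEndo B hinj
    have hA : ∀ v, A v = B v := fun v => rfl
    have hAU : ∀ u : U, A u = M u := by
      intro u
      rw [hA, hB, hpuU, hpwU, hptU u (hUp u u.2)]; simp
    refine ⟨A, hBi, ?_, ?_, hAU, ?_⟩
    · apply Submodule.eq_of_le_of_finrank_eq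
      · rintro _ ⟨x, hx, rfl⟩
        have := hAU ⟨x, hx⟩
        simp only [LinearEquiv.coe_coe] at this ⊢
        rw [this]; exact (M _).2
      · exact LinearEquiv.finrank_map_eq A _
    · apply Submodule.eq_of_le_of_finrank_eq
      · rintro _ ⟨x, hx, rfl⟩
        have hw : pw x = 0 := by
          apply Subtype.ext
          apply hnd
          intro y
          have hxw : (pw x : V) ∈ U ⊔ Ut := by
            have h3 : (pw x : V) = x - (pu x + pt x) := by
              exact eq_sub_of_add_eq' (hdec x).symm
            rw [h3]
            exact sub_mem hx (add_mem (Submodule.mem_sup_left (pu x).2)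
              (Submodule.mem_sup_right (pt x).2))
          rw [hdec y]
          have g1 := hWU _ (pw x).2 (pu y) (pu y).2
          have g2 := hWT _ (pw x).2 (pt y) (pt y).2
          have g3 := (pw y).2 _ hxw
          rw [hsymm] at g1 g2
          rw [map_add, map_add, g1, g2, g3]; simp
        change B x ∈ _
        rw [hB, hw]
        refine add_mem (add_mem (add_mem ?_ ?_) ?_) ?_
        · exact Submodule.mem_sup_left (M _).2
        · exact Submodule.mem_sup_right (M' _).2
        · exact Submodule.mem_sup_left (s _).2
        · simp
      · exact LinearEquiv.finrank_map_eq A _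
    · intro x
      rw [hA, hB, hpuW, hpwW, hptU x (hWp x x.2)]; simp
  · intro A hA h1 h2
    constructor
    · rintro ⟨hU, hW⟩
      have hηU : ∀ v, v - A v ∈ U := by
        intro v
        have h3 : v - A v = pt v - A (pt v) := by
          conv_lhs => rw [hdec v]
          rw [map_add, map_add, hU _ (pu v).2, hW _ (pw v).2]; abel
        have h4 : v - A v ∈ U ⊔ Ut := by
          rw [h3]
          have h5 : (pt v : V) ∈ U ⊔ Ut := Submodule.mem_sup_right (pt v).2
          refine sub_mem h5 ?_
          rw [← h2]
          exact ⟨_, h5, rfl⟩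
        have h6 : v - A v ∈ perp Φ U := by
          intro u hu
          have := hA u v
          rw [hU u hu] at this
          rw [map_sub, this, sub_self]
        obtain ⟨u, hu, t, ht, h7⟩ := Submodule.mem_sup.1 h4
        have h8 : t ∈ perp Φ U ⊓ Ut := by
          refine ⟨?_, ht⟩
          have : t = (v - A v) - u := by rw [← h7]; abel
          rw [this]
          exact sub_mem h6 (hUp u hu)
        rw [hdisj, Submodule.mem_bot] at h8
        rw [← h7, h8, add_zero]; exact hu
      refine ⟨LinearMap.id - A.toLinearMap, hηU, ?_, ?_, ?_⟩
      · intro x hx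
        change x - A x = 0
        have h3 := hdec x
        rw [hptU x hx] at h3
        rw [h3]
        simp [hU _ (pu x).2, hW _ (pw x).2]
      · intro v v'
        change Φ (v - A v) v' = - Φ v (v' - A v')
        have := hUiso _ (hηU v) _ (hηU v')
        have h4 := hA v v'
        simp only [map_sub, LinearMap.sub_apply] at *
        linarith
      · intro v
        change A v = v - (v - A v)
        abel
    · rintro ⟨η, -, h4, -, h6⟩
      exact ⟨fun u hu => by rw [h6, h4 u (hUp u hu), sub_zero],
        fun u hu => by rw [h6, h4 u (hWp u hu), sub_zero]⟩
end

section
/- Let U ⊆ V be an isotropic subspace and ψ : U^⊥ → U a ℚ-linear map with ψ(u) = 0 for every u ∈ U. Then there exists an isometry A ∈ O(V) such that A(u) = u for all u ∈ U and A(w) = w − ψ(w) for all w ∈ U^⊥. -/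
/-- If `U` is isotropic and `ψ : U^⊥ → U` is linear with `ψ(u) = 0`
for `u ∈ U`, then there exists `A ∈ O(V)` with `A(u) = u` on `U` and
`A(w) = w − ψ(w)` on `U^⊥`. -/
theorem stmt7 {V : Type*} [AddCommGroup V] [Module ℚ V] [FiniteDimensional ℚ V]
    (Φ : V →ₗ[ℚ] V →ₗ[ℚ] ℚ)
    (hsymm : ∀ v w : V, Φ v w = Φ w v)
    (hnd : ∀ v : V, (∀ w : V, Φ v w = 0) → v = 0)
    (U : Submodule ℚ V)
    (hUiso : ∀ u ∈ U, ∀ u' ∈ U, Φ u u' = 0)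
    (ψ : ↥(perp Φ U) →ₗ[ℚ] V)
    (hψU : ∀ w : ↥(perp Φ U), ψ w ∈ U)
    (hψ0 : ∀ w : ↥(perp Φ U), (w : V) ∈ U → ψ w = 0) :
    ∃ A : V ≃ₗ[ℚ] V,
      (∀ v w : V, Φ (A v) (A w) = Φ v w) ∧
      (∀ u ∈ U, A u = u) ∧
      (∀ w : ↥(perp Φ U), A (w : V) = (w : V) - ψ w) := by
  classical
  obtain ⟨N', hN'⟩ := LinearMap.exists_extend (ψ.codRestrict U hψU)
  let N : V →ₗ[ℚ] V := U.subtype ∘ₗ N'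
  have hNU : ∀ v, N v ∈ U := fun v => (N' v).2
  have hNψ : ∀ w : ↥(perp Φ U), N w = ψ w := by
    intro w
    have h := LinearMap.congr_fun hN' w
    have h2 := congrArg Subtype.val h
    simpa [N] using h2
  have hUle : ∀ u ∈ U, u ∈ perp Φ U := fun u hu u' hu' => hUiso u' hu' u hu
  have hN0 : ∀ u ∈ U, N u = 0 := by
    intro u hu
    rw [hNψ ⟨u, hUle u hu⟩]
    exact hψ0 _ hu
  have hinj : Function.Injective Φ := by
    rw [injective_iff_map_eq_zero]
    intro v hv
    exact hnd v (fun w => by rw [hv]; rfl)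
  let e : V ≃ₗ[ℚ] Module.Dual ℚ V :=
    LinearEquiv.ofInjectiveOfFinrankEq Φ hinj (Subspace.dual_finrank_eq).symm
  have he : ∀ v, e v = Φ v := fun v => rfl
  let M : V →ₗ[ℚ] V := e.symm.toLinearMap ∘ₗ N.dualMap ∘ₗ Φ
  have hM : ∀ v w, Φ (M v) w = Φ v (N w) := by
    intro v w
    rw [← he]
    simp [M]
  let X : V →ₗ[ℚ] V := M - N
  have hX : ∀ v, X v = M v - N v := fun v => rfl
  have hskew : ∀ v w, Φ (X v) w = - Φ v (X w) := by
    intro v w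
    rw [hX, hX, map_sub, map_sub, LinearMap.sub_apply, hM, hsymm (N v) w, ← hM w v, hsymm v (M w)]
    ring
  have hXp : ∀ v, X v ∈ perp Φ U := by
    intro v u hu
    rw [hX, map_sub, hsymm u (M v), hM, hN0 u hu, hUiso u hu _ (hNU v)]
    simp
  have hXw : ∀ w : ↥(perp Φ U), X w = - ψ w := by
    intro w
    have : M w = 0 := by
      apply hnd
      intro z
      rw [hM, hsymm]
      exact w.2 _ (hNU z)
    rw [hX, this, hNψ, zero_sub]
  have hXU : ∀ u ∈ U, X u = 0 := by
    intro u hu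
    rw [hXw ⟨u, hUle u hu⟩, hψ0 _ hu, neg_zero]
  have hXX : ∀ w : ↥(perp Φ U), X (X w) = 0 := by
    intro w
    rw [hXw, map_neg, hXU _ (hψU w), neg_zero]
  have hX3 : ∀ v, X (X (X v)) = 0 := fun v => hXX ⟨X v, hXp v⟩
  let A : V →ₗ[ℚ] V := LinearMap.id + X + (1 / 2 : ℚ) • (X ∘ₗ X)
  have hA : ∀ v, A v = v + X v + (1 / 2 : ℚ) • X (X v) := fun v => rfl
  have hiso : ∀ v w, Φ (A v) (A w) = Φ v w := by
    intro v w
    simp only [hA, map_add, map_smul, LinearMap.add_apply, LinearMap.smul_apply, hskew, hX3,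
      map_zero, map_neg, smul_eq_mul]
    ring
  have hAinj : Function.Injective A := by
    rw [injective_iff_map_eq_zero]
    intro v hv
    apply hnd
    intro w
    rw [← hiso, hv, map_zero, LinearMap.zero_apply]
  refine ⟨LinearEquiv.ofInjectiveEndo A hAinj, fun v w => hiso v w, fun u hu => ?_, fun w => ?_⟩
  · change A u = u
    rw [hA, hXU u hu, map_zero]
    simp
  · change A w = w - ψ w
    rw [hA, hXX, hXw]
    simp [sub_eq_add_neg]
end

section
/- Let U ⊆ V be a 2-dimensional isotropic subspace with basis (z, w). If A ∈ O(V) satisfies A(x) = x for every x ∈ U^⊥, then there exists a scalar t ∈ ℚ such that A(v) − v = t·((v, w)·z − (v, z)·w) for every v ∈ V. (This expresses that the space of anti-symmetric homomorphisms U* → U is 1-dimensional when dim U = 2.) -/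
/-- Let `U` be a 2-dimensional isotropic subspace with basis
`(z, w)`. If `A ∈ O(V)` fixes `U^⊥` pointwise, then there is `t ∈ ℚ` with
`A(v) − v = t·((v, w)·z − (v, z)·w)` for every `v`; i.e. the space of
anti-symmetric homomorphisms `U* → U` is 1-dimensional. -/
theorem stmt9 {V : Type*} [AddCommGroup V] [Module ℚ V] [FiniteDimensional ℚ V]
    (Φ : V →ₗ[ℚ] V →ₗ[ℚ] ℚ)
    (hsymm : ∀ v w : V, Φ v w = Φ w v)
    (hnd : ∀ v : V, (∀ w : V, Φ v w = 0) → v = 0)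
    (U : Submodule ℚ V)
    (hUiso : ∀ u ∈ U, ∀ u' ∈ U, Φ u u' = 0)
    (z w : V) (hzU : z ∈ U) (hwU : w ∈ U)
    (hindep : LinearIndependent ℚ ![z, w])
    (hUspan : U = Submodule.span ℚ {z, w})
    (A : V ≃ₗ[ℚ] V) (hA : ∀ v v' : V, Φ (A v) (A v') = Φ v v')
    (hfix : ∀ x ∈ perp Φ U, A x = x) :
    ∃ t : ℚ, ∀ v : V, A v - v = t • ((Φ v w) • z - (Φ v z) • w) := by
  have hsurj : Function.Surjective Φ := by
    have hinj : Function.Injective Φ := by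
      rw [injective_iff_map_eq_zero]
      intro v hv
      exact hnd v (fun y => by rw [hv]; rfl)
    exact (LinearMap.injective_iff_surjective_of_finrank_eq_finrank
      (Subspace.dual_finrank_eq (K := ℚ) (V := V)).symm).1 hinj
  have key : ∀ a b : V, a ∉ Submodule.span ℚ {b} → ∃ e : V, Φ e a = 1 ∧ Φ e b = 0 := by
    intro a b hab
    obtain ⟨g, hg, hle⟩ := Submodule.exists_le_ker_of_notMem hab
    obtain ⟨e, he⟩ := hsurj g
    have hb : Φ e b = 0 := by
      rw [he]
      exact hle (Submodule.mem_span_singleton_self b)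
    refine ⟨(g a)⁻¹ • e, ?_, ?_⟩
    · simp [he, hg]
    · simp [hb]
  rw [LinearIndependent.pair_iff] at hindep
  obtain ⟨e, hez, hew⟩ := key z w (by
    rw [Submodule.mem_span_singleton]
    rintro ⟨c, hc⟩
    have := hindep 1 (-c) (by rw [← hc]; module)
    exact one_ne_zero this.1)
  obtain ⟨f, hfw, hfz⟩ := key w z (by
    rw [Submodule.mem_span_singleton]
    rintro ⟨c, hc⟩
    have := hindep (-c) 1 (by rw [← hc]; module)
    exact one_ne_zero this.2)
  have hze : Φ z e = 1 := by rw [hsymm, hez]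
  have hwe : Φ w e = 0 := by rw [hsymm, hew]
  have hzf : Φ z f = 0 := by rw [hsymm, hfz]
  have hwf : Φ w f = 1 := by rw [hsymm, hfw]
  have hzz := hUiso z hzU z hzU
  have hzw := hUiso z hzU w hwU
  have hwz := hUiso w hwU z hzU
  have hww := hUiso w hwU w hwU
  have hdec : ∀ v : V, ∃ x ∈ perp Φ U, v = Φ v z • e + Φ v w • f + x := by
    intro v
    refine ⟨v - Φ v z • e - Φ v w • f, ?_, by module⟩
    intro u hu
    rw [hUspan, Submodule.mem_span_pair] at hu
    obtain ⟨a, b, rfl⟩ := hu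
    simp [hze, hwe, hzf, hwf, hsymm v z, hsymm v w]
  have hB : ∀ v : V, A v - v = Φ (A v - v) e • z + Φ (A v - v) f • w := by
    intro v
    rw [← sub_eq_zero]
    apply hnd
    intro y
    obtain ⟨x, hx, hy⟩ := hdec y
    have h1 : Φ z x = 0 := hx z hzU
    have h2 : Φ w x = 0 := hx w hwU
    have h3 : Φ (A v) x = Φ v x := by
      have := hA v x
      rwa [hfix x hx] at this
    rw [hy]
    simp only [map_sub, map_add, map_smul, LinearMap.sub_apply, LinearMap.add_apply,
      LinearMap.smul_apply, smul_eq_mul, h1, h2, h3, hze, hwe, hzf, hwf]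
    ring
  have hBB : ∀ u v : V, Φ (A u - u) v + Φ (A v - v) u = 0 := by
    intro u v
    have h0 : Φ (A u - u) (A v - v) = 0 := by
      rw [hB u, hB v]
      simp only [map_add, map_smul, LinearMap.add_apply,
        LinearMap.smul_apply, smul_eq_mul, hzz, hzw, hwz, hww]
      ring
    have h1 := hA u v
    have h2 := hsymm (A v) u
    have h3 := hsymm v u
    simp only [map_sub, LinearMap.sub_apply] at h0 ⊢
    linarith
  have hee : Φ (A e - e) e = 0 := by linarith [hBB e e]
  have hff : Φ (A f - f) f = 0 := by linarith [hBB f f]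
  have hfe : Φ (A f - f) e = - Φ (A e - e) f := by linarith [hBB f e]
  have hBe := hB e
  have hBf := hB f
  rw [hee] at hBe
  rw [hff, hfe] at hBf
  generalize Φ (A e - e) f = s at hBe hBf
  refine ⟨-s, fun v => ?_⟩
  obtain ⟨x, hx, hv⟩ := hdec v
  have hAx := hfix x hx
  have : A v - v = Φ v z • (A e - e) + Φ v w • (A f - f) := by
    generalize Φ v z = p at hv ⊢
    generalize Φ v w = q at hv ⊢
    rw [hv]
    simp only [map_add, map_smul, hAx]
    module
  rw [this, hBe, hBf]
  module
end

section
/- Let U ⊆ V be an isotropic subspace and A ∈ O(V) with A(U) = U. Let γ_A be the induced linear automorphism of the quotient space W = U^⊥/U. Then det(A) = det(γ_A). -/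
/-- If `U` is isotropic and `A ∈ O(V)` satisfies `A(U) = U`, and
`γ_A` is the induced linear automorphism of `W = U^⊥/U` (realized as the quotient
of `U^⊥` by the preimage of `U`), then `det A = det γ_A`. -/
theorem stmt10 {V : Type*} [AddCommGroup V] [Module ℚ V] [FiniteDimensional ℚ V]
    (Φ : V →ₗ[ℚ] V →ₗ[ℚ] ℚ)
    (hsymm : ∀ v w : V, Φ v w = Φ w v)
    (hnd : ∀ v : V, (∀ w : V, Φ v w = 0) → v = 0)
    (U : Submodule ℚ V)
    (hUiso : ∀ u ∈ U, ∀ u' ∈ U, Φ u u' = 0)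
    (A : V ≃ₗ[ℚ] V) (hA : ∀ v w : V, Φ (A v) (A w) = Φ v w)
    (hAU : Submodule.map A.toLinearMap U = U) :
    -- the induced automorphism γ_A of W = U^⊥/U exists ...
    (∃ γ : (↥(perp Φ U) ⧸ Submodule.comap (perp Φ U).subtype U) ≃ₗ[ℚ]
           (↥(perp Φ U) ⧸ Submodule.comap (perp Φ U).subtype U),
       ∀ w x : ↥(perp Φ U), (x : V) = A (w : V) →
         γ (Submodule.Quotient.mk w) = Submodule.Quotient.mk x) ∧
    -- ... and for any such γ_A one has det A = det γ_A
    (∀ γ : (↥(perp Φ U) ⧸ Submodule.comap (perp Φ U).subtype U) ≃ₗ[ℚ]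
           (↥(perp Φ U) ⧸ Submodule.comap (perp Φ U).subtype U),
       (∀ w x : ↥(perp Φ U), (x : V) = A (w : V) →
         γ (Submodule.Quotient.mk w) = Submodule.Quotient.mk x) →
       LinearMap.det A.toLinearMap = LinearMap.det γ.toLinearMap) := by
  have hAUm : ∀ u ∈ U, A u ∈ U := fun u hu => by
    rw [← hAU]; exact Submodule.mem_map_of_mem hu
  have hAUs : ∀ u ∈ U, ∃ u' ∈ U, A u' = u := fun u hu => by
    rw [← hAU] at hu
    obtain ⟨u', h, h'⟩ := hu
    exact ⟨u', h, h'⟩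
  have hUP : U ≤ perp Φ U := fun u hu u' hu' => hUiso u' hu' u hu
  have hAP : ∀ v ∈ perp Φ U, A v ∈ perp Φ U := by
    intro v hv u hu
    obtain ⟨u', hu', rfl⟩ := hAUs u hu
    rw [hA]; exact hv u' hu'
  have hP : perp Φ U ≤ (perp Φ U).comap A.toLinearMap := hAP
  obtain ⟨P, hPdef⟩ : ∃ P, P = perp Φ U := ⟨_, rfl⟩
  rw [← hPdef] at hUP hAP hP ⊢
  have hPmem : ∀ v, v ∈ P ↔ ∀ u ∈ U, Φ u v = 0 := fun v => by rw [hPdef]; rfl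
  set B : P →ₗ[ℚ] P := A.toLinearMap.restrict hP with hB
  have hBc : ∀ w : P, (B w : V) = A w := fun w => rfl
  set U' : Submodule ℚ P := Submodule.comap P.subtype U with hU'
  have hU'B : U' ≤ U'.comap B := fun w hw => hAUm _ hw
  -- the quotient map
  have hinj : Function.Injective (U'.mapQ U' B hU'B) := by
    rw [← LinearMap.ker_eq_bot, LinearMap.ker_eq_bot']
    intro m hm
    obtain ⟨w, rfl⟩ := Submodule.Quotient.mk_surjective _ m
    rw [Submodule.mapQ_apply, Submodule.Quotient.mk_eq_zero] at hm
    rw [Submodule.Quotient.mk_eq_zero]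
    obtain ⟨u', hu', h⟩ := hAUs (B w : V) hm
    have : u' = w := A.injective h
    show (w : V) ∈ U
    rwa [← this]
  refine ⟨⟨LinearEquiv.ofInjectiveEndo _ hinj, ?_⟩, ?_⟩
  · intro w x hx
    have : x = B w := Subtype.ext hx
    rw [this]
    rfl
  intro γ hγ
  have hγeq : γ.toLinearMap = U'.mapQ U' B hU'B := by
    ext w
    exact hγ w (B w) rfl
  rw [hγeq, LinearMap.det_eq_det_mul_det P A.toLinearMap hP,
    LinearMap.det_eq_det_mul_det U' B hU'B]
  set a : U' →ₗ[ℚ] U' := B.restrict (p := U') (q := U') hU'B with ha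
  set C := P.mapQ P A.toLinearMap hP with hC
  suffices h : a.det * C.det = 1 by
    linear_combination (LinearMap.det (U'.mapQ U' B hU'B)) * h
  let ι : U' →ₗ[ℚ] V := P.subtype ∘ₗ U'.subtype
  have hι : Function.Injective ι := fun x y h => Subtype.ext (Subtype.ext h)
  let g : V →ₗ[ℚ] Module.Dual ℚ U' := ι.dualMap ∘ₗ Φ
  have hg : ∀ v (u : U'), g v u = Φ v (ι u) := fun v u => rfl
  have hgP : ∀ v, g v = 0 ↔ v ∈ P := by
    intro v
    rw [hPmem]
    constructor
    · intro h u hu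
      have := LinearMap.congr_fun h (⟨⟨u, hUP hu⟩, hu⟩ : U')
      rw [hsymm]; exact this
    · intro h
      ext u
      rw [hg, hsymm]
      exact h _ u.2
  have hΦi : Function.Injective Φ := by
    rw [← LinearMap.ker_eq_bot, LinearMap.ker_eq_bot']
    intro v hv
    exact hnd v fun w => by rw [hv]; rfl
  have hΦs : Function.Surjective Φ :=
    (LinearMap.injective_iff_surjective_of_finrank_eq_finrank
      (Subspace.dual_finrank_eq (K := ℚ) (V := V)).symm).1 hΦi
  have hgs : Function.Surjective g :=
    (LinearMap.dualMap_surjective_of_injective hι).comp hΦs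
  let f : (V ⧸ P) →ₗ[ℚ] Module.Dual ℚ U' := P.liftQ g fun v hv => (hgP v).2 hv
  have hf : ∀ v, f (Submodule.Quotient.mk v) = g v := fun v => rfl
  have hfb : Function.Bijective f := by
    constructor
    · rw [← LinearMap.ker_eq_bot, LinearMap.ker_eq_bot']
      intro m hm
      obtain ⟨w, rfl⟩ := Submodule.Quotient.mk_surjective _ m
      rw [Submodule.Quotient.mk_eq_zero]
      exact (hgP w).1 hm
    · intro d
      obtain ⟨v, rfl⟩ := hgs d
      exact ⟨Submodule.Quotient.mk v, rfl⟩
  let e := LinearEquiv.ofBijective f hfb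
  have key : a.dualMap ∘ₗ (e.toLinearMap ∘ₗ C ∘ₗ e.symm.toLinearMap) = LinearMap.id := by
    refine LinearMap.ext fun d => ?_
    obtain ⟨m, rfl⟩ := e.surjective d
    obtain ⟨v, rfl⟩ := Submodule.Quotient.mk_surjective _ m
    simp only [LinearMap.comp_apply, LinearEquiv.coe_coe, LinearEquiv.symm_apply_apply,
      LinearMap.id_apply]
    ext u
    exact hA v (ι u)
  have h := congrArg LinearMap.det key
  rw [LinearMap.det_comp, LinearMap.det_dualMap, LinearMap.det_conj, LinearMap.det_id] at h
  exact h
end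

section
/- Let L be an even lattice in V, U ⊆ V an isotropic subspace, and I = U ∩ L. Then there exists a ℤ-submodule Ĩ ⊆ L* such that (ĩ, λ) ∈ ℤ for all ĩ ∈ Ĩ and λ ∈ I, and such that for every ℤ-linear map f : I → ℤ there is a unique ĩ ∈ Ĩ with (ĩ, λ) = f(λ) for all λ ∈ I (i.e. the pairing between Ĩ and I is unimodular). Moreover any such Ĩ is primitive in L*: (ℚ-span of Ĩ) ∩ L* = Ĩ. -/
/-- The dual lattice \`L* = {v ∈ V : (v, L) ⊆ ℤ}\` of \`L\`, as a subset of \`V\`. -/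
def dualL {V : Type*} [AddCommGroup V] [Module ℚ V]
    (Φ : V →ₗ[ℚ] V →ₗ[ℚ] ℚ) (L : Submodule ℤ V) : Set V :=
  {v | ∀ x ∈ L, ∃ n : ℤ, Φ v x = (n : ℚ)}

/-- The pairing between the ℤ-submodules \`It\` and \`I\` of \`V\` is unimodular: it is
ℤ-valued, and every ℤ-linear functional on \`I\` is represented by a unique element
of \`It\`. -/
def Unimodular {V : Type*} [AddCommGroup V] [Module ℚ V]
    (Φ : V →ₗ[ℚ] V →ₗ[ℚ] ℚ) (It I : Submodule ℤ V) : Prop :=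
  (∀ x ∈ It, ∀ y ∈ I, ∃ n : ℤ, Φ x y = (n : ℚ)) ∧
  ∀ f : ↥I →ₗ[ℤ] ℤ, ∃! x : V, x ∈ It ∧ ∀ y : ↥I, Φ x (y : V) = (f y : ℚ)


theorem aux_retract {V : Type*} [AddCommGroup V] [Module ℚ V]
    (L : Submodule ℤ V) (hfg : L.FG) (U : Submodule ℚ V) :
    ∃ π : L →ₗ[ℤ] V, (∀ x, π x ∈ (U.restrictScalars ℤ ⊓ L)) ∧
      ∀ x : L, (x : V) ∈ U → π x = x := by
  haveI : Module.Finite ℤ L := Module.Finite.iff_fg.mpr hfg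
  -- the map L → V/U, image is f.g. torsion-free
  let q : L →ₗ[ℤ] (V ⧸ U) := (U.mkQ.restrictScalars ℤ).comp L.subtype
  haveI : Module.IsTorsionFree ℤ (V ⧸ U) := Module.IsTorsionFree.trans_faithfulSMul ℤ ℚ (V ⧸ U)
  haveI : Module.Free ℤ (LinearMap.range q) := inferInstance
  obtain ⟨s, hs⟩ := Module.projective_lifting_property q.rangeRestrict LinearMap.id
    q.surjective_rangeRestrict
  refine ⟨L.subtype.comp (LinearMap.id - s.comp q.rangeRestrict), ?_, ?_⟩
  · intro x
    refine ⟨?_, ?_⟩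
    · have h1 := congrArg Subtype.val (LinearMap.congr_fun hs (q.rangeRestrict x))
      have h2 : q (s (q.rangeRestrict x)) = q x := h1
      have h3 : q (x - s (q.rangeRestrict x)) = 0 := by rw [map_sub, h2, sub_self]
      exact (Submodule.Quotient.mk_eq_zero U).1 h3
    · exact (x - s (q.rangeRestrict x)).2
  · intro x hx
    have h : q.rangeRestrict x = 0 := by
      apply Subtype.ext
      exact (Submodule.Quotient.mk_eq_zero U).2 hx
    simp [h]

theorem aux_ext {V : Type*} [AddCommGroup V] [Module ℚ V]
    (L : Submodule ℤ V) (hfg : L.FG)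
    (hLspan : Submodule.span ℚ (L : Set V) = ⊤) (f : L →ₗ[ℤ] ℤ) :
    ∃ g : V →ₗ[ℚ] ℚ, ∀ x : L, g x = f x := by
  haveI : Module.Finite ℤ L := Module.Finite.iff_fg.mpr hfg
  haveI : Module.IsTorsionFree ℤ V := Module.IsTorsionFree.trans_faithfulSMul ℤ ℚ V
  haveI : Module.Free ℤ L := inferInstance
  let b := Module.Free.chooseBasis ℤ L
  have hli : LinearIndependent ℤ (fun i => (b i : V)) :=
    b.linearIndependent.map' L.subtype (Submodule.ker_subtype L)
  have hliQ : LinearIndependent ℚ (fun i => (b i : V)) :=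
    (LinearIndependent.iff_fractionRing ℤ ℚ).1 hli
  obtain ⟨g, hg⟩ : ∃ g : V →ₗ[ℚ] ℚ, ∀ i, g (b i) = f (b i) := by
    obtain ⟨g, hg⟩ := LinearMap.exists_extend
      ((Module.Basis.span hliQ).constr ℚ (fun i => (f (b i) : ℚ)))
    refine ⟨g, fun i => ?_⟩
    have h := LinearMap.congr_fun hg (Module.Basis.span hliQ i)
    rw [Module.Basis.constr_basis] at h
    rw [← h]
    simp [Module.Basis.span_apply]
  refine ⟨g, fun x => ?_⟩
  have h : (g.restrictScalars ℤ).comp L.subtype = (Algebra.linearMap ℤ ℚ).comp f :=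
    b.ext (fun i => by simpa using hg i)
  simpa using LinearMap.congr_fun h x

theorem aux_denom {V : Type*} [AddCommGroup V] [Module ℚ V] (It : Submodule ℤ V) (w : V)
    (hw : w ∈ Submodule.span ℚ (It : Set V)) : ∃ n : ℤ, n ≠ 0 ∧ n • w ∈ It := by
  induction hw using Submodule.span_induction with
  | mem x h => exact ⟨1, one_ne_zero, by simpa using h⟩
  | zero => exact ⟨1, one_ne_zero, by simp⟩
  | add x y _ _ hx hy =>
    obtain ⟨n, hn, hnx⟩ := hx
    obtain ⟨m, hm, hmy⟩ := hy
    refine ⟨n * m, mul_ne_zero hn hm, ?_⟩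
    rw [smul_add]
    refine It.add_mem ?_ ?_
    · rw [mul_comm, mul_smul]; exact It.smul_mem m hnx
    · rw [mul_smul]; exact It.smul_mem n hmy
  | smul a x _ hx =>
    obtain ⟨n, hn, hnx⟩ := hx
    refine ⟨n * a.den, mul_ne_zero hn (by exact_mod_cast a.den_nz), ?_⟩
    have : (n * (a.den : ℤ)) • a • x = a.num • n • x := by
      rw [← Int.cast_smul_eq_zsmul ℚ, ← Int.cast_smul_eq_zsmul ℚ a.num,
        ← Int.cast_smul_eq_zsmul ℚ n, smul_smul, smul_smul]
      congr 1
      push_cast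
      rw [mul_assoc, Rat.den_mul_eq_num, mul_comm]
    rw [this]
    exact It.smul_mem _ hnx

theorem aux_prim {V : Type*} [AddCommGroup V] [Module ℚ V]
    (Φ : V →ₗ[ℚ] V →ₗ[ℚ] ℚ) (L I : Submodule ℤ V) (hI : I ≤ L) 
    (It : Submodule ℤ V) (hIt : (It : Set V) ⊆ dualL Φ L) (hu : Unimodular Φ It I) :
      ((Submodule.span ℚ (It : Set V) : Set V) ∩ dualL Φ L) = (It : Set V) := by
  apply Set.Subset.antisymm
  · rintro v ⟨hv, hvd⟩
    choose! F hF using hvd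
    let f : I →ₗ[ℤ] ℤ := AddMonoidHom.toIntLinearMap
      { toFun := fun y => F y
        map_zero' := by
          have := hF 0 L.zero_mem
          rw [map_zero] at this
          exact_mod_cast this.symm
        map_add' := fun x y => by
          have h := hF _ (hI (x + y).2)
          have h1 := hF _ (hI x.2)
          have h2 := hF _ (hI y.2)
          rw [Submodule.coe_add, map_add, h1, h2] at h
          exact_mod_cast h.symm }
    obtain ⟨x, ⟨hx, hxf⟩, -⟩ := hu.2 f
    have hw : v - x ∈ Submodule.span ℚ (It : Set V) :=
      Submodule.sub_mem _ hv (Submodule.subset_span hx)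
    obtain ⟨n, hn, hnw⟩ := aux_denom It _ hw
    have h0 : n • (v - x) = 0 := by
      refine (hu.2 0).unique ⟨hnw, fun y => ?_⟩ ⟨It.zero_mem, fun y => by simp⟩
      have h1 : Φ v y = F y := hF _ (hI y.2)
      have h2 : Φ x y = F y := hxf y
      simp [h1, h2]
    rw [← Int.cast_smul_eq_zsmul ℚ] at h0
    rcases smul_eq_zero.1 h0 with h | h
    · exact absurd (by exact_mod_cast h) hn
    · rw [sub_eq_zero.1 h]; exact hx
  · exact fun x hx => ⟨Submodule.subset_span hx, hIt hx⟩

theorem aux_exists {V : Type*} [AddCommGroup V] [Module ℚ V] [FiniteDimensional ℚ V]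
    (Φ : V →ₗ[ℚ] V →ₗ[ℚ] ℚ)
    (hnd : ∀ v : V, (∀ w : V, Φ v w = 0) → v = 0)
    (L : Submodule ℤ V) (hfg : L.FG)
    (hLspan : Submodule.span ℚ (L : Set V) = ⊤)
    (U : Submodule ℚ V) :
    (∃ It : Submodule ℤ V, (It : Set V) ⊆ dualL Φ L ∧
      Unimodular Φ It (U.restrictScalars ℤ ⊓ L)) := by
  obtain ⟨π, hπ, hπ'⟩ := aux_retract L hfg U
  have hinj : Function.Injective Φ := by
    rw [injective_iff_map_eq_zero]
    exact fun v hv => hnd v (fun w => by rw [hv]; rfl)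
  have hsurj : Function.Surjective Φ :=
    (LinearMap.injective_iff_surjective_of_finrank_eq_finrank
      (Subspace.dual_finrank_eq (K := ℚ) (V := V)).symm).1 hinj
  let It : Submodule ℤ V :=
    { carrier := {v | (∀ x ∈ L, ∃ n : ℤ, Φ v x = (n : ℚ)) ∧ ∀ x : L, Φ v x = Φ v (π x)}
      zero_mem' := ⟨fun x _ => ⟨0, by simp⟩, fun x => by simp⟩
      add_mem' := by
        rintro a b ⟨ha, ha'⟩ ⟨hb, hb'⟩
        refine ⟨fun x hx => ?_, fun x => by simp [ha' x, hb' x]⟩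
        obtain ⟨n, hn⟩ := ha x hx
        obtain ⟨m, hm⟩ := hb x hx
        exact ⟨n + m, by simp [hn, hm]⟩
      smul_mem' := by
        rintro c a ⟨ha, ha'⟩
        refine ⟨fun x hx => ?_, fun x => by simp [ha' x]⟩
        obtain ⟨n, hn⟩ := ha x hx
        exact ⟨c * n, by simp [hn]⟩ }
  refine ⟨It, fun v hv => hv.1, fun x hx y hy => hx.1 y hy.2, fun f => ?_⟩
  obtain ⟨g, hg⟩ := aux_ext L hfg hLspan (f.comp (π.codRestrict _ hπ))
  obtain ⟨v, rfl⟩ := hsurj g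
  have key : ∀ y : ↥(U.restrictScalars ℤ ⊓ L), Φ v (y : V) = (f y : ℚ) := by
    intro y
    have h := hg ⟨y, y.2.2⟩
    rw [h]
    have : π.codRestrict _ hπ ⟨y, y.2.2⟩ = y := Subtype.ext (hπ' ⟨y, y.2.2⟩ y.2.1)
    rw [LinearMap.comp_apply, this]
  refine ⟨v, ⟨⟨fun x hx => ⟨_, hg ⟨x, hx⟩⟩, fun x => ?_⟩, key⟩, ?_⟩
  · rw [hg x]; exact (key ⟨π x, hπ x⟩).symm
  · rintro w ⟨hw, hwf⟩
    apply hinj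
    apply LinearMap.ext_on hLspan
    intro x hx
    have h1 := hw.2 ⟨x, hx⟩
    have h2 := hwf ⟨_, hπ ⟨x, hx⟩⟩
    have h3 := key ⟨_, hπ ⟨x, hx⟩⟩
    have h4 := hg ⟨x, hx⟩
    exact h1.trans (h2.trans h4.symm)

/-- For an even lattice `L` in `V`, an isotropic subspace `U`,
and `I = U ∩ L`, there exists a ℤ-submodule `Ĩ ⊆ L*` whose pairing with `I` is
unimodular; and any such `Ĩ` is primitive in `L*`: `(ℚ-span Ĩ) ∩ L* = Ĩ`. -/
theorem stmt11 {V : Type*} [AddCommGroup V] [Module ℚ V] [FiniteDimensional ℚ V]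
    (Φ : V →ₗ[ℚ] V →ₗ[ℚ] ℚ)
    (hsymm : ∀ v w : V, Φ v w = Φ w v)
    (hnd : ∀ v : V, (∀ w : V, Φ v w = 0) → v = 0)
    (L : Submodule ℤ V) (hfg : L.FG)
    (hLspan : Submodule.span ℚ (L : Set V) = ⊤)
    (heven : ∀ x ∈ L, ∃ n : ℤ, Φ x x = 2 * (n : ℚ))
    (U : Submodule ℚ V)
    (hUiso : ∀ u ∈ U, ∀ u' ∈ U, Φ u u' = 0) :
    (∃ It : Submodule ℤ V, (It : Set V) ⊆ dualL Φ L ∧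
      Unimodular Φ It (U.restrictScalars ℤ ⊓ L)) ∧
    (∀ It : Submodule ℤ V, (It : Set V) ⊆ dualL Φ L →
      Unimodular Φ It (U.restrictScalars ℤ ⊓ L) →
      ((Submodule.span ℚ (It : Set V) : Set V) ∩ dualL Φ L) = (It : Set V)) := by
  refine ⟨aux_exists Φ hnd L hfg hLspan U, fun It h1 h2 => ?_⟩
  exact aux_prim Φ L _ inf_le_right It h1 h2
end

section
/- Let L be an even lattice in V, U an isotropic subspace with U = ℚ-span of I where I = U ∩ L, and let Ĩ ⊆ L* be a ℤ-submodule pairing unimodularly with I. Set I^⊥_{L*} = U^⊥ ∩ L* and Ĩ_L = {ũ ∈ Ĩ : there exists ν ∈ L with (ũ, λ) = (ν, λ) for all λ ∈ I}. Then L* = I^⊥_{L*} ⊕ Ĩ and L + I^⊥_{L*} = I^⊥_{L*} ⊕ Ĩ_L as internal direct sums of ℤ-modules: every μ ∈ L* is uniquely the sum of an element of I^⊥_{L*} and an element of Ĩ, and every μ ∈ L + I^⊥_{L*} is uniquely the sum of an element of I^⊥_{L*} and an element of Ĩ_L. -/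
/-- With `L` an even lattice, `U` isotropic spanned by `I = U ∩ L`,
and `Ĩ ⊆ L*` pairing unimodularly with `I`, one has the internal direct sum
decompositions `L* = I^⊥_{L*} ⊕ Ĩ` and `L + I^⊥_{L*} = I^⊥_{L*} ⊕ Ĩ_L` of
ℤ-modules, where `I^⊥_{L*} = U^⊥ ∩ L*` and
`Ĩ_L = {ũ ∈ Ĩ : ∃ ν ∈ L, (ũ, ·) = (ν, ·) on I}`. -/
theorem stmt12 {V : Type*} [AddCommGroup V] [Module ℚ V] [FiniteDimensional ℚ V]
    (Φ : V →ₗ[ℚ] V →ₗ[ℚ] ℚ)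
    (hsymm : ∀ v w : V, Φ v w = Φ w v)
    (hnd : ∀ v : V, (∀ w : V, Φ v w = 0) → v = 0)
    (L : Submodule ℤ V) (hfg : L.FG)
    (hLspan : Submodule.span ℚ (L : Set V) = ⊤)
    (heven : ∀ x ∈ L, ∃ n : ℤ, Φ x x = 2 * (n : ℚ))
    (U : Submodule ℚ V)
    (hUiso : ∀ u ∈ U, ∀ u' ∈ U, Φ u u' = 0)
    (I : Submodule ℤ V) (hI : I = U.restrictScalars ℤ ⊓ L)
    (hU : U = Submodule.span ℚ (I : Set V))
    (It : Submodule ℤ V) (hItdual : (It : Set V) ⊆ dualL Φ L)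
    (hItuni : Unimodular Φ It I) :
    -- L* = I^⊥_{L*} ⊕ Ĩ
    (∀ μ ∈ dualL Φ L, ∃! p : V × V,
      (p.1 ∈ perp Φ U ∧ p.1 ∈ dualL Φ L) ∧ p.2 ∈ It ∧ μ = p.1 + p.2) ∧
    -- L + I^⊥_{L*} = I^⊥_{L*} ⊕ Ĩ_L
    (∀ μ : V, (∃ l ∈ L, ∃ c : V, (c ∈ perp Φ U ∧ c ∈ dualL Φ L) ∧ μ = l + c) →
      ∃! p : V × V,
        (p.1 ∈ perp Φ U ∧ p.1 ∈ dualL Φ L) ∧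
        (p.2 ∈ It ∧ ∃ ν ∈ L, ∀ y ∈ I, Φ p.2 y = Φ ν y) ∧
        μ = p.1 + p.2) := by
  have hIL : ∀ y ∈ I, y ∈ L := by
    intro y hy
    rw [hI] at hy
    exact hy.2
  have hIU : ∀ y ∈ I, y ∈ U := by
    intro y hy
    rw [hI] at hy
    exact hy.1
  have hperp : ∀ v : V, (∀ y ∈ I, Φ v y = 0) → v ∈ perp Φ U := by
    intro v hv u hu
    rw [hU] at hu
    induction hu using Submodule.span_induction with
    | mem x hx => rw [hsymm]; exact hv x hx
    | zero => simp
    | add x y _ _ hx hy => rw [map_add, LinearMap.add_apply, hx, hy, add_zero]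
    | smul a x _ hx => rw [map_smul, LinearMap.smul_apply, hx, smul_zero]
  have hperp' : ∀ v ∈ perp Φ U, ∀ y ∈ I, Φ v y = 0 := by
    intro v hv y hy
    rw [hsymm]
    exact hv y (hIU y hy)
  have hfun : ∀ μ ∈ dualL Φ L, ∃ f : ↥I →ₗ[ℤ] ℤ, ∀ y : ↥I, Φ μ (y : V) = (f y : ℚ) := by
    intro μ hμ
    choose g hg using fun y : ↥I => hμ (y : V) (hIL y y.2)
    let f : ↥I →+ ℤ := AddMonoidHom.mk' g (by
      intro a b
      have h : ((g (a + b) : ℤ) : ℚ) = ((g a + g b : ℤ) : ℚ) := by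
        rw [← hg, Int.cast_add, ← hg, ← hg, Submodule.coe_add, map_add]
      exact_mod_cast h)
    exact ⟨f.toIntLinearMap, fun y => hg y⟩
  have huniq : ∀ x ∈ It, ∀ x' ∈ It, (∀ y ∈ I, Φ x y = Φ x' y) → x = x' := by
    intro x hx x' hx' h
    obtain ⟨f, hf⟩ := hfun x (hItdual hx)
    exact (hItuni.2 f).unique ⟨hx, hf⟩
      ⟨hx', fun y => by rw [← h y y.2, hf y]⟩
  have hdec : ∀ μ ∈ dualL Φ L, ∃ x ∈ It, (∀ y ∈ I, Φ x y = Φ μ y) ∧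
      (μ - x ∈ perp Φ U ∧ μ - x ∈ dualL Φ L) := by
    intro μ hμ
    obtain ⟨f, hf⟩ := hfun μ hμ
    obtain ⟨x, ⟨hx, hxf⟩, -⟩ := hItuni.2 f
    have h : ∀ y ∈ I, Φ x y = Φ μ y := fun y hy => by
      rw [hxf ⟨y, hy⟩, ← hf ⟨y, hy⟩]
    refine ⟨x, hx, h, hperp _ fun y hy => ?_, fun z hz => ?_⟩
    · rw [map_sub, LinearMap.sub_apply, h y hy, sub_self]
    · obtain ⟨m, hm⟩ := hμ z hz
      obtain ⟨n, hn⟩ := hItdual hx z hz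
      exact ⟨m - n, by rw [map_sub, LinearMap.sub_apply, hm, hn, Int.cast_sub]⟩
  have hU2 : ∀ μ a x b x' : V, a ∈ perp Φ U → b ∈ perp Φ U → x ∈ It → x' ∈ It →
      μ = a + x → μ = b + x' → (a, x) = (b, x') := by
    intro μ a x b x' ha hb hx hx' h1 h2
    have hxx : x = x' := by
      refine huniq x hx x' hx' fun y hy => ?_
      have h := congrArg (fun v => Φ v y) (h1.symm.trans h2)
      simpa [hperp' a ha y hy, hperp' b hb y hy] using h
    subst hxx
    have hab : a = b := add_right_cancel (h1.symm.trans h2)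
    rw [hab]
  have hLd : ∀ l ∈ L, l ∈ dualL Φ L := by
    intro l hl z hz
    obtain ⟨a, ha⟩ := heven l hl
    obtain ⟨b, hb⟩ := heven z hz
    obtain ⟨c, hc⟩ := heven (l + z) (L.add_mem hl hz)
    refine ⟨c - a - b, ?_⟩
    simp only [map_add, LinearMap.add_apply] at hc
    rw [hsymm z l] at hc
    push_cast
    linarith
  refine ⟨?_, ?_⟩
  · intro μ hμ
    obtain ⟨x, hx, -, h⟩ := hdec μ hμ
    refine ⟨(μ - x, x), ⟨h, hx, (sub_add_cancel μ x).symm⟩, ?_⟩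
    rintro ⟨b, x'⟩ ⟨hb, hx', h2⟩
    exact hU2 μ _ _ _ _ hb.1 h.1 hx' hx h2 (sub_add_cancel μ x).symm
  · rintro μ ⟨l, hl, c, hc, hlc⟩
    have hμ : μ ∈ dualL Φ L := by
      intro z hz
      obtain ⟨m, hm⟩ := hLd l hl z hz
      obtain ⟨n, hn⟩ := hc.2 z hz
      exact ⟨m + n, by rw [hlc, map_add, LinearMap.add_apply, hm, hn, Int.cast_add]⟩
    obtain ⟨x, hx, hxμ, h⟩ := hdec μ hμ
    refine ⟨(μ - x, x), ⟨h, ⟨hx, l, hl, fun y hy => ?_⟩, (sub_add_cancel μ x).symm⟩, ?_⟩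
    · rw [hxμ y hy, hlc, map_add, LinearMap.add_apply, hperp' c hc.1 y hy, add_zero]
    rintro ⟨b, x'⟩ ⟨hb, ⟨hx', -⟩, h2⟩
    exact hU2 μ _ _ _ _ hb.1 h.1 hx' hx h2 (sub_add_cancel μ x).symm
end

section
/- Let L be an even lattice in V, U an isotropic subspace with U = ℚ-span of I where I = U ∩ L, Ĩ ⊆ L* a ℤ-submodule pairing unimodularly with I, Ũ = ℚ-span of Ĩ, and W̃ = (U + Ũ)^⊥. Then L = I ⊕ (L ∩ Ĩ^⊥) and L ∩ U^⊥ = I ⊕ (L ∩ W̃) as internal direct sums of ℤ-modules; in particular every λ ∈ L ∩ U^⊥ is uniquely the sum of an element of I and an element of L ∩ W̃. -/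
open Classical in
theorem split_aux {V : Type*} [AddCommGroup V] [Module ℚ V]
    (Φ : V →ₗ[ℚ] V →ₗ[ℚ] ℚ) (L : Submodule ℤ V) (hfg : L.FG)
    (I : Submodule ℤ V) (hIL : I ≤ L)
    (It : Submodule ℤ V) (hItdual : (It : Set V) ⊆ dualL Φ L)
    (hItuni : Unimodular Φ It I) :
    (∀ lam ∈ L, ∃ x ∈ I, ∀ s ∈ It, Φ s (lam - x) = 0) ∧
    (∀ x ∈ I, (∀ s ∈ It, Φ s x = 0) → x = 0) := by
  have : IsNoetherian ℤ L := isNoetherian_of_fg_of_noetherian L hfg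
  have : Module.Finite ℤ I :=
    Module.Finite.of_injective (Submodule.inclusion hIL) (Submodule.inclusion_injective hIL)
  have : IsAddTorsionFree V := IsAddTorsionFree.of_module_rat V
  have : Module.IsTorsionFree ℤ I := inferInstance
  have : Module.Free ℤ I := inferInstance
  let b := Module.Free.chooseBasis ℤ I
  obtain ⟨-, huni⟩ := hItuni
  choose t ht _ using fun i => huni (b.coord i)
  have hrep : ∀ x : I, (x : V) = ∑ i, b.repr x i • (b i : V) := by
    intro x
    have h := congrArg (fun z : I => (z : V)) (b.sum_repr x)
    simp only [Submodule.coe_sum, Submodule.coe_smul] at h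
    exact h.symm
  refine ⟨?_, ?_⟩
  · intro lam hlam
    choose n hn using fun i => hItdual (ht i).1 lam hlam
    refine ⟨∑ i, n i • (b i : V), I.sum_mem fun i _ => I.smul_mem _ (b i).2, ?_⟩
    intro s hs
    choose m hm using fun i => hItdual hs _ (hIL (b i).2)
    have hs' : s = ∑ i, m i • t i := by
      obtain ⟨w, -, hw⟩ := huni (∑ i, m i • b.coord i)
      have h1 : s = w := by
        apply hw
        refine ⟨hs, fun y => ?_⟩
        rw [hrep y]
        simp only [map_sum, map_zsmul, hm]
        simp [mul_comm]
      have h2 : ∑ i, m i • t i = w := by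
        apply hw
        refine ⟨It.sum_mem fun i _ => It.smul_mem _ (ht i).1, fun y => ?_⟩
        simp only [map_sum, map_zsmul, LinearMap.sum_apply, LinearMap.smul_apply, (ht _).2]
        simp
      rw [h1, h2]
    rw [map_sub]
    have e1 : Φ s lam = ∑ i, (m i : ℚ) * n i := by
      rw [hs']
      simp only [map_sum, map_zsmul, LinearMap.sum_apply, LinearMap.smul_apply, hn]
      simp
    have e2 : Φ s (∑ i, n i • (b i : V)) = ∑ i, (m i : ℚ) * n i := by
      simp only [map_sum, map_zsmul, hm]
      simp [mul_comm]
    rw [e1, e2, sub_self]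
  · intro x hx h
    have : (⟨x, hx⟩ : I) = 0 := by
      apply b.ext_elem
      intro i
      have h1 := (ht i).2 ⟨x, hx⟩
      have h2 := h _ (ht i).1
      simp only [h2] at h1
      have : b.coord i ⟨x, hx⟩ = 0 := by exact_mod_cast h1.symm
      simpa using this
    simpa using this

/-- With `L`, `U`, `I = U ∩ L`, `Ĩ`, `Ũ = ℚ-span Ĩ`, and
`W̃ = (U + Ũ)^⊥` as before, one has the internal direct sum decompositions
`L = I ⊕ (L ∩ Ĩ^⊥)` and `L ∩ U^⊥ = I ⊕ (L ∩ W̃)` of ℤ-modules. -/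
theorem stmt13 {V : Type*} [AddCommGroup V] [Module ℚ V] [FiniteDimensional ℚ V]
    (Φ : V →ₗ[ℚ] V →ₗ[ℚ] ℚ)
    (hsymm : ∀ v w : V, Φ v w = Φ w v)
    (hnd : ∀ v : V, (∀ w : V, Φ v w = 0) → v = 0)
    (L : Submodule ℤ V) (hfg : L.FG)
    (hLspan : Submodule.span ℚ (L : Set V) = ⊤)
    (heven : ∀ x ∈ L, ∃ n : ℤ, Φ x x = 2 * (n : ℚ))
    (U : Submodule ℚ V)
    (hUiso : ∀ u ∈ U, ∀ u' ∈ U, Φ u u' = 0)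
    (I : Submodule ℤ V) (hI : I = U.restrictScalars ℤ ⊓ L)
    (hU : U = Submodule.span ℚ (I : Set V))
    (It : Submodule ℤ V) (hItdual : (It : Set V) ⊆ dualL Φ L)
    (hItuni : Unimodular Φ It I)
    (Ut : Submodule ℚ V) (hUt : Ut = Submodule.span ℚ (It : Set V))
    (Wt : Submodule ℚ V) (hWt : Wt = perp Φ (U ⊔ Ut)) :
    -- L = I ⊕ (L ∩ Ĩ^⊥)
    (∀ lam ∈ L, ∃! p : V × V,
      p.1 ∈ I ∧ (p.2 ∈ L ∧ ∀ s ∈ It, Φ s p.2 = 0) ∧ lam = p.1 + p.2) ∧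
    -- L ∩ U^⊥ = I ⊕ (L ∩ W̃)
    (∀ lam : V, lam ∈ L → lam ∈ perp Φ U →
      ∃! p : V × V,
        p.1 ∈ I ∧ (p.2 ∈ L ∧ p.2 ∈ Wt) ∧ lam = p.1 + p.2) := by
  have hIL : I ≤ L := hI ▸ inf_le_right
  have hIU : ∀ x ∈ I, x ∈ U := fun x hx => by rw [hI] at hx; exact hx.1
  obtain ⟨hex, hz⟩ := split_aux Φ L hfg I hIL It hItdual hItuni
  have huniq : ∀ a ∈ I, ∀ c ∈ I, ∀ d e : V, (∀ s ∈ It, Φ s d = 0) → (∀ s ∈ It, Φ s e = 0) →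
      a + d = c + e → a = c ∧ d = e := by
    intro a ha c hc d e hd he h
    have h0 : a - c = e - d := by rw [sub_eq_sub_iff_add_eq_add, h, add_comm]
    have h1 : a - c = 0 := by
      apply hz _ (I.sub_mem ha hc)
      intro s hs
      rw [h0, map_sub, hd s hs, he s hs, sub_zero]
    have h2 : a = c := sub_eq_zero.mp h1
    subst h2
    exact ⟨rfl, add_left_cancel h⟩
  have hWI : ∀ v ∈ Wt, ∀ s ∈ It, Φ s v = 0 := by
    intro v hv s hs
    rw [hWt] at hv
    exact hv s (Submodule.mem_sup_right (hUt ▸ Submodule.subset_span hs))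
  refine ⟨?_, ?_⟩
  · intro lam hlam
    obtain ⟨x, hx, hs⟩ := hex lam hlam
    refine ⟨(x, lam - x), ⟨hx, ⟨L.sub_mem hlam (hIL hx), hs⟩, by simp⟩, ?_⟩
    rintro ⟨p, q⟩ ⟨hp, ⟨-, hq⟩, he⟩
    obtain ⟨h1, h2⟩ := huniq p hp x hx q (lam - x) hq hs (by rw [← he]; simp)
    exact Prod.ext h1 h2
  · intro lam hlam hperp
    obtain ⟨x, hx, hs⟩ := hex lam hlam
    refine ⟨(x, lam - x), ⟨hx, ⟨L.sub_mem hlam (hIL hx), ?_⟩, by simp⟩, ?_⟩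
    · rw [hWt]
      intro w hw
      obtain ⟨u, hu, v, hv, rfl⟩ := Submodule.mem_sup.mp hw
      have e1 : Φ u (lam - x) = 0 := by
        rw [map_sub, hperp u hu, hUiso u hu x (hIU x hx), sub_zero]
      have e2 : Φ v (lam - x) = 0 := by
        have hle : Submodule.span ℚ (It : Set V) ≤ LinearMap.ker (Φ.flip (lam - x)) := by
          rw [Submodule.span_le]
          intro y hy
          exact hs y hy
        rw [hUt] at hv
        exact hle hv
      rw [map_add, LinearMap.add_apply, e1, e2, add_zero]
    rintro ⟨p, q⟩ ⟨hp, ⟨-, hq⟩, he⟩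
    obtain ⟨h1, h2⟩ := huniq p hp x hx q (lam - x) (hWI q hq) hs (by rw [← he]; simp)
    exact Prod.ext h1 h2
end

section
/- Let L be an even lattice in V, U an isotropic subspace with U = ℚ-span of I where I = U ∩ L, Ĩ ⊆ L* a ℤ-submodule pairing unimodularly with I, Ũ = ℚ-span of Ĩ, W̃ = (U + Ũ)^⊥, Λ̃ = L ∩ W̃, Λ̃* = {w ∈ W̃ : (w, λ) ∈ ℤ for all λ ∈ Λ̃}, and Ĩ_L = {ũ ∈ Ĩ : there exists ν ∈ L with (ũ, λ) = (ν, λ) for all λ ∈ I}. Let α : Ũ → U be the unique ℚ-linear map with (α(ũ), ṽ) = (ũ, α(ṽ)) and (ũ − α(ũ), ṽ − α(ṽ)) = 0 for all ũ, ṽ ∈ Ũ. Then there exists a ℤ-linear map ι : Ĩ_L → Λ̃*/Λ̃ such that: (a) for every ũ ∈ Ĩ_L and every w ∈ Λ̃* whose class modulo Λ̃ equals ι(ũ), one has (w, w)/2 − (ũ, ũ)/2 ∈ ℤ; and (b) for all u ∈ U, w ∈ W̃, ũ ∈ Ũ, the sum u + w + ũ lies in L if and only if ũ ∈ Ĩ_L,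 w ∈ Λ̃*, the class of w modulo Λ̃ equals ι(ũ), and u + 2·α(ũ) ∈ I. -/
/-- The lattice \`Λ̃ = L ∩ W̃\`, as a subset of \`V\`. -/
def lambdaSet {V : Type*} [AddCommGroup V] [Module ℚ V]
    (L : Submodule ℤ V) (Wt : Submodule ℚ V) : Set V :=
  {x | x ∈ L ∧ x ∈ Wt}

/-- The dual lattice \`Λ̃* = {w ∈ W̃ : (w, Λ̃) ⊆ ℤ}\` of \`Λ̃ = L ∩ W̃\` inside \`W̃\`. -/
def lambdaStarSet {V : Type*} [AddCommGroup V] [Module ℚ V]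
    (Φ : V →ₗ[ℚ] V →ₗ[ℚ] ℚ) (L : Submodule ℤ V) (Wt : Submodule ℚ V) : Set V :=
  {x | x ∈ Wt ∧ ∀ y ∈ L, y ∈ Wt → ∃ n : ℤ, Φ x y = (n : ℚ)}

/-- The sublattice \`Ĩ_L = {ũ ∈ Ĩ : ∃ ν ∈ L, (ũ, ·) = (ν, ·) on I}\` of \`Ĩ\`. -/
def ItLSet {V : Type*} [AddCommGroup V] [Module ℚ V]
    (Φ : V →ₗ[ℚ] V →ₗ[ℚ] ℚ) (L I It : Submodule ℤ V) : Set V :=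
  {x | x ∈ It ∧ ∃ ν ∈ L, ∀ y ∈ I, Φ x y = Φ ν y}

theorem key_bases {V : Type*} [AddCommGroup V] [Module ℚ V]
    (Φ : V →ₗ[ℚ] V →ₗ[ℚ] ℚ) (L : Submodule ℤ V) (hfg : L.FG)
    (U : Submodule ℚ V)
    (I : Submodule ℤ V) (hI : I = U.restrictScalars ℤ ⊓ L)
    (hU : U = Submodule.span ℚ (I : Set V))
    (It : Submodule ℤ V) (hItuni : Unimodular Φ It I)
    (Ut : Submodule ℚ V) (hUt : Ut = Submodule.span ℚ (It : Set V)) :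
    ∃ (n : Type) (_ : Fintype n) (e x : n → V), (∀ j, e j ∈ I) ∧ (∀ j, x j ∈ It) ∧
      (∀ u ∈ U, u = ∑ j, Φ (x j) u • e j) ∧ (∀ t ∈ Ut, t = ∑ j, Φ t (e j) • x j) := by
  classical
  have hIL : I ≤ L := by rw [hI]; exact inf_le_right
  have hLn : IsNoetherian ℤ L := isNoetherian_of_fg_of_noetherian L hfg
  have hIfin : Module.Finite ℤ I := by
    rw [Module.Finite.iff_fg]
    exact (isNoetherian_submodule.mp hLn) I hIL
  have htfV : Module.IsTorsionFree ℤ V := by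
    have : IsAddTorsionFree V := IsAddTorsionFree.of_module_rat V
    infer_instance
  have hfree : Module.Free ℤ I := inferInstance
  let b := Module.finBasis ℤ I
  choose x hx hxu using fun j => hItuni.2 (b.coord j)
  have hxI : ∀ j, ∀ y : I, Φ (x j) y = (b.repr y j : ℚ) := fun j y => (hx j).2 y
  have hsum : ∀ y : I, (y : V) = ∑ j, (b.repr y j : ℚ) • (b j : V) := by
    intro y
    have h := congrArg (Subtype.val) (b.sum_repr y)
    refine h.symm.trans ?_
    rw [AddSubmonoidClass.coe_finset_sum]
    simp only [Int.cast_smul_eq_zsmul]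
    rfl
  have key1 : ∀ u ∈ U, u = ∑ j, Φ (x j) u • (b j : V) := by
    intro u hu
    rw [hU] at hu
    induction hu using Submodule.span_induction with
    | mem y hy =>
      have h2 : ∀ j, Φ (x j) y = (b.repr ⟨y, hy⟩ j : ℚ) := fun j => hxI j ⟨y, hy⟩
      simp only [h2]
      exact hsum ⟨y, hy⟩
    | zero => simp
    | add a c _ _ ha hc =>
      simp only [map_add, add_smul, Finset.sum_add_distrib]
      rw [← ha, ← hc]
    | smul q a _ ha =>
      simp only [map_smul, smul_eq_mul, mul_smul]
      rw [← Finset.smul_sum, ← ha]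
  have key2 : ∀ t ∈ Ut, t = ∑ j, Φ t (b j : V) • x j := by
    intro u hu
    rw [hUt] at hu
    induction hu using Submodule.span_induction with
    | mem t ht =>
      choose n hn using fun j => hItuni.1 t ht (b j) (b j).2
      simp only [hn, Int.cast_smul_eq_zsmul]
      obtain ⟨z, _, hz⟩ := hItuni.2 (∑ j, n j • b.coord j)
      have h1 := hz t ⟨ht, ?_⟩
      · have h2 := hz (∑ j, n j • x j) ⟨It.sum_mem fun j _ => It.smul_mem _ (hx j).1, ?_⟩
        · rw [h2]; exact h1
        · intro y
          simp only [map_sum, LinearMap.sum_apply, ← Int.cast_smul_eq_zsmul ℚ, map_smul,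
            LinearMap.smul_apply, hxI]
          simp
      · intro y
        rw [hsum y]
        simp [hn, mul_comm]
    | zero => simp
    | add a c _ _ ha hc =>
      simp only [map_add, LinearMap.add_apply, add_smul, Finset.sum_add_distrib]
      rw [← ha, ← hc]
    | smul q a _ ha =>
      simp only [map_smul, LinearMap.smul_apply, smul_eq_mul, mul_smul]
      rw [← Finset.smul_sum, ← ha]
  exact ⟨_, inferInstance, fun j => (b j : V), x, fun j => (b j).2, fun j => (hx j).1, key1, key2⟩

/-- **Theorem: decomposition of `L`.** With `L`, `U`, `I`, `Ĩ`,
`Ũ`, `W̃`, `Λ̃`, `Λ̃*`, `Ĩ_L` and the correction map `α` as in the context, there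
is a ℤ-linear map `ι : Ĩ_L → Λ̃*/Λ̃` (encoded here as a function `ι : V → V` that
maps `Ĩ_L` into `Λ̃*` and is additive modulo `Λ̃`) such that representatives of
`ι(ũ)` have the same norm as `ũ` in `ℚ/ℤ`, and such that `u + w + ũ ∈ L` iff
`ũ ∈ Ĩ_L`, `w ∈ Λ̃*` with `w ≡ ι(ũ) mod Λ̃`, and `u ∈ −2α(ũ) + I`. -/
theorem stmt14 {V : Type*} [AddCommGroup V] [Module ℚ V] [FiniteDimensional ℚ V]
    (Φ : V →ₗ[ℚ] V →ₗ[ℚ] ℚ)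
    (hsymm : ∀ v w : V, Φ v w = Φ w v)
    (hnd : ∀ v : V, (∀ w : V, Φ v w = 0) → v = 0)
    (L : Submodule ℤ V) (hfg : L.FG)
    (hLspan : Submodule.span ℚ (L : Set V) = ⊤)
    (heven : ∀ x ∈ L, ∃ n : ℤ, Φ x x = 2 * (n : ℚ))
    (U : Submodule ℚ V)
    (hUiso : ∀ u ∈ U, ∀ u' ∈ U, Φ u u' = 0)
    (I : Submodule ℤ V) (hI : I = U.restrictScalars ℤ ⊓ L)
    (hU : U = Submodule.span ℚ (I : Set V))
    (It : Submodule ℤ V) (hItdual : (It : Set V) ⊆ dualL Φ L)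
    (hItuni : Unimodular Φ It I)
    (Ut : Submodule ℚ V) (hUt : Ut = Submodule.span ℚ (It : Set V))
    (Wt : Submodule ℚ V) (hWt : Wt = perp Φ (U ⊔ Ut))
    (α : V →ₗ[ℚ] V) (hαU : ∀ x ∈ Ut, α x ∈ U)
    (hαsym : ∀ x ∈ Ut, ∀ y ∈ Ut, Φ (α x) y = Φ x (α y))
    (hαiso : ∀ x ∈ Ut, ∀ y ∈ Ut, Φ (x - α x) (y - α y) = 0) :
    ∃ ι : V → V,
      -- ι maps Ĩ_L into Λ̃*
      (∀ x ∈ ItLSet Φ L I It, ι x ∈ lambdaStarSet Φ L Wt) ∧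
      -- ι is additive modulo Λ̃ (i.e. descends to a ℤ-linear map Ĩ_L → Λ̃*/Λ̃)
      (∀ x ∈ ItLSet Φ L I It, ∀ y ∈ ItLSet Φ L I It,
        ι (x + y) - ι x - ι y ∈ lambdaSet L Wt) ∧
      -- (a) norm condition: (ι ũ)²/2 = ũ²/2 in ℚ/ℤ
      (∀ x ∈ ItLSet Φ L I It, ∀ w ∈ lambdaStarSet Φ L Wt,
        w - ι x ∈ lambdaSet L Wt → ∃ n : ℤ, Φ w w / 2 - Φ x x / 2 = (n : ℚ)) ∧
      -- (b) characterization of membership in L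
      (∀ u ∈ U, ∀ w ∈ Wt, ∀ t ∈ Ut,
        (u + w + t ∈ L ↔
          t ∈ ItLSet Φ L I It ∧ w ∈ lambdaStarSet Φ L Wt ∧
          w - ι t ∈ lambdaSet L Wt ∧ u + (2 : ℚ) • α t ∈ I)) := by
  classical
  obtain ⟨n, _, e, x, he, hx, key1, key2⟩ := key_bases Φ L hfg U I hI hU It hItuni Ut hUt
  have hIL : I ≤ L := by rw [hI]; exact inf_le_right
  have hIU : ∀ y ∈ I, y ∈ U := by
    intro y hy; rw [hI] at hy; exact hy.1
  have hItUt : ∀ y ∈ It, y ∈ Ut := by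
    intro y hy; rw [hUt]; exact Submodule.subset_span hy
  have hWU : ∀ w ∈ Wt, ∀ u ∈ U, Φ u w = 0 := by
    intro w hw u hu; rw [hWt] at hw; exact hw u (Submodule.mem_sup_left hu)
  have hWUt : ∀ w ∈ Wt, ∀ u ∈ Ut, Φ u w = 0 := by
    intro w hw u hu; rw [hWt] at hw; exact hw u (Submodule.mem_sup_right hu)
  -- integral criteria
  have intL : ∀ a ∈ L, ∀ b ∈ L, ∃ n : ℤ, Φ a b = (n : ℚ) := by
    intro a ha b hb
    obtain ⟨p, hp⟩ := heven a ha
    obtain ⟨q, hq⟩ := heven b hb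
    obtain ⟨r, hr⟩ := heven (a + b) (L.add_mem ha hb)
    refine ⟨r - p - q, ?_⟩
    simp only [map_add, LinearMap.add_apply] at hr
    rw [hsymm b a] at hr
    push_cast
    linarith
  have memI : ∀ u ∈ U, (∀ y ∈ It, ∃ n : ℤ, Φ y u = (n : ℚ)) → u ∈ I := by
    intro u hu h
    choose m hm using fun j => h (x j) (hx j)
    rw [key1 u hu]
    refine I.sum_mem fun j _ => ?_
    rw [hm, Int.cast_smul_eq_zsmul]
    exact I.smul_mem _ (he j)
  have memIt : ∀ t ∈ Ut, (∀ y ∈ I, ∃ n : ℤ, Φ t y = (n : ℚ)) → t ∈ It := by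
    intro u hu h
    choose m hm using fun j => h (e j) (he j)
    rw [key2 u hu]
    refine It.sum_mem fun j _ => ?_
    rw [hm, Int.cast_smul_eq_zsmul]
    exact It.smul_mem _ (hx j)
  have hα2 : ∀ a ∈ Ut, ∀ b ∈ Ut, Φ b ((2 : ℚ) • α a) = Φ b a := by
    intro a ha b hb
    have h1 := hαiso a ha b hb
    have h2 := hαsym a ha b hb
    have h3 := hUiso _ (hαU a ha) _ (hαU b hb)
    simp only [map_sub, LinearMap.sub_apply] at h1
    rw [map_smul, smul_eq_mul, hsymm b (α a), hsymm b a]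
    linarith
  -- forward direction
  have fwd : ∀ u ∈ U, ∀ w ∈ Wt, ∀ t ∈ Ut, u + w + t ∈ L →
      t ∈ ItLSet Φ L I It ∧ w ∈ lambdaStarSet Φ L Wt ∧ u + (2 : ℚ) • α t ∈ I := by
    intro u hu w hw t ht hL
    have h1 : ∀ y ∈ I, Φ t y = Φ (u + w + t) y := by
      intro y hy
      simp only [map_add, LinearMap.add_apply]
      rw [hUiso u hu y (hIU y hy), hsymm w y, hWU w hw y (hIU y hy)]
      ring
    refine ⟨⟨memIt t ht fun y hy => ?_, _, hL, h1⟩, ⟨hw, fun y hy hyW => ?_⟩, memI _ ?_ ?_⟩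
    · rw [h1 y hy]; exact intL _ hL _ (hIL hy)
    · obtain ⟨k, hk⟩ := intL _ hL y hy
      refine ⟨k, ?_⟩
      rw [← hk]
      simp only [map_add, LinearMap.add_apply]
      rw [hWU y hyW u hu, hWUt y hyW t ht]
      ring
    · exact U.add_mem hu (U.smul_mem _ (hαU t ht))
    · intro y hy
      obtain ⟨k, hk⟩ := hItdual hy _ hL
      refine ⟨k, ?_⟩
      rw [← hk]
      simp only [map_add]
      rw [hα2 t ht y (hItUt y hy), hWUt w hw y (hItUt y hy)]
      ring
  -- existence of a lift
  have ex : ∀ t, ∃ w, t ∈ ItLSet Φ L I It → w ∈ Wt ∧ ∃ u ∈ U, u + w + t ∈ L := by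
    intro t
    by_cases ht : t ∈ ItLSet Φ L I It
    swap
    · exact ⟨0, fun h => absurd h ht⟩
    obtain ⟨htI, ν, hν, hνy⟩ := ht
    have hu : ∑ j, Φ (x j) (ν - t) • e j ∈ U :=
      U.sum_mem fun j _ => U.smul_mem _ (hIU _ (he j))
    set u := ∑ j, Φ (x j) (ν - t) • e j with hudef
    refine ⟨ν - t - u, fun _ => ⟨?_, u, hu, ?_⟩⟩
    · rw [hWt]
      intro z hz
      obtain ⟨a, ha, b, hb, rfl⟩ := Submodule.mem_sup.mp hz
      have h1 : Φ a (ν - t - u) = 0 := by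
        have h0 : ∀ j, Φ (e j) (ν - t) = 0 := by
          intro j
          rw [map_sub, hsymm (e j) ν, hsymm (e j) t, hνy _ (he j), sub_self]
        rw [map_sub, hUiso a ha u hu, sub_zero, key1 a ha]
        simp only [map_sum, LinearMap.sum_apply, map_smul, LinearMap.smul_apply, h0, smul_zero,
          Finset.sum_const_zero]
      have h2 : Φ b (ν - t - u) = 0 := by
        rw [map_sub, sub_eq_zero]
        conv_lhs => rw [key2 b hb]
        rw [hudef]
        simp only [map_sum, LinearMap.sum_apply, map_smul, LinearMap.smul_apply, smul_eq_mul]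
        exact Finset.sum_congr rfl fun j _ => mul_comm _ _
      rw [map_add, LinearMap.add_apply, h1, h2, add_zero]
    · have : u + (ν - t - u) + t = ν := by abel
      rw [this]; exact hν
  choose ι hι using ex
  have zeroCase : ∀ u ∈ U, ∀ w ∈ Wt, u + w ∈ L → w ∈ L := by
    intro u hu w hw h
    have h1 := (fwd u hu w hw 0 Ut.zero_mem (by simpa using h)).2.2
    have h2 : u ∈ L := hIL (by simpa using h1)
    have := L.sub_mem h h2
    simpa using this
  refine ⟨ι, ?_, ?_, ?_, ?_⟩
  · intro t ht
    obtain ⟨hw, u, hu, h⟩ := hι t ht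
    exact (fwd u hu _ hw t (hItUt t ht.1) h).2.1
  · intro s hs t ht
    have hst : s + t ∈ ItLSet Φ L I It := by
      obtain ⟨h1, ν, hν, h2⟩ := hs
      obtain ⟨h3, μ, hμ, h4⟩ := ht
      refine ⟨It.add_mem h1 h3, ν + μ, L.add_mem hν hμ, fun y hy => ?_⟩
      simp only [map_add, LinearMap.add_apply, h2 y hy, h4 y hy]
    obtain ⟨hw, u, hu, h⟩ := hι s hs
    obtain ⟨hw', u', hu', h'⟩ := hι t ht
    obtain ⟨hw'', u'', hu'', h''⟩ := hι _ hst
    have hW : ι (s + t) - ι s - ι t ∈ Wt := Wt.sub_mem (Wt.sub_mem hw'' hw) hw'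
    refine ⟨zeroCase (u'' - u - u') (U.sub_mem (U.sub_mem hu'' hu) hu') _ hW ?_, hW⟩
    have := L.sub_mem (L.sub_mem h'' h) h'
    convert this using 1
    abel
  · intro t ht w hw hwt
    obtain ⟨hw1, u, hu, h⟩ := hι t ht
    have htU := hItUt t ht.1
    have hL : u + w + t ∈ L := by
      have hd : w - ι t ∈ L := hwt.1
      have := L.add_mem h hd
      convert this using 1
      abel
    have hi := (fwd u hu w hw.1 t htU hL).2.2
    obtain ⟨p, hp⟩ := hItuni.1 t ht.1 _ hi
    obtain ⟨q, hq⟩ := heven _ hL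
    refine ⟨q - p, ?_⟩
    rw [map_add, hα2 t htU t htU] at hp
    simp only [map_add, LinearMap.add_apply] at hq
    rw [hUiso u hu u hu, hWU w hw.1 u hu, hsymm w u, hWU w hw.1 u hu, hsymm w t,
      hWUt w hw.1 t htU, hsymm u t] at hq
    push_cast
    linarith
  · intro u hu w hw t ht
    constructor
    · intro hL
      obtain ⟨h1, h2, h3⟩ := fwd u hu w hw t ht hL
      obtain ⟨hw', u', hu', h'⟩ := hι t h1
      have hW := Wt.sub_mem hw hw'
      refine ⟨h1, h2, ⟨zeroCase (u - u') (U.sub_mem hu hu') _ hW ?_, hW⟩, h3⟩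
      have := L.sub_mem hL h'
      convert this using 1
      abel
    · rintro ⟨h1, h2, h3, h4⟩
      obtain ⟨hw', u', hu', h'⟩ := hι t h1
      have h5 := (fwd u' hu' _ hw' t ht h').2.2
      have hd : w - ι t ∈ L := h3.1
      have hd2 := hIL (I.sub_mem h4 h5)
      have := L.add_mem (L.add_mem h' hd) hd2
      convert this using 1
      abel
end

section
/- Let L be an even lattice in V, U an isotropic subspace with U = ℚ-span of I where I = U ∩ L, Ĩ ⊆ L* a ℤ-submodule pairing unimodularly with I, Ũ = ℚ-span of Ĩ, W̃ = (U + Ũ)^⊥, Λ̃ = L ∩ W̃, Λ̃* = {w ∈ W̃ : (w, λ) ∈ ℤ for all λ ∈ Λ̃}, Ĩ_L = {ũ ∈ Ĩ : there exists ν ∈ L with (ũ, λ) = (ν, λ) for all λ ∈ I}, I_{L*} = U ∩ L*, and I^⊥_{L*} = U^⊥ ∩ L*. Then there exists a ℤ-linear map ι̂ : Λ̃*/Λ̃ → U/I_{L*} such that for all u ∈ U, w ∈ W̃, ũ ∈ Ũ: the sum u + w + ũ lies in L* if and only if w ∈ Λ̃*, ũ ∈ Ĩ, and the class of u modulo I_{L*}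 equals −ι̂(class of w modulo Λ̃); and u + w + ũ lies in L + I^⊥_{L*} if and only if w ∈ Λ̃*, ũ ∈ Ĩ_L, and the class of u modulo I_{L*} equals −ι̂(class of w modulo Λ̃). -/
/-- The lattice `I_{L*} = U ∩ L*`, as a subset of `V`. -/
def ILstarSet {V : Type*} [AddCommGroup V] [Module ℚ V]
    (Φ : V →ₗ[ℚ] V →ₗ[ℚ] ℚ) (L : Submodule ℤ V) (U : Submodule ℚ V) : Set V :=
  {x | x ∈ U ∧ x ∈ dualL Φ L}

theorem clear_denom {V : Type*} [AddCommGroup V] [Module ℚ V] (S : Submodule ℤ V) (v : V)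
    (hv : v ∈ Submodule.span ℚ (S : Set V)) : ∃ n : ℤ, n ≠ 0 ∧ n • v ∈ S := by
  induction hv using Submodule.span_induction with
  | mem x hx => exact ⟨1, one_ne_zero, by simpa using hx⟩
  | zero => exact ⟨1, one_ne_zero, by simp⟩
  | add x y _ _ hx hy =>
    obtain ⟨n, hn, hx⟩ := hx
    obtain ⟨m, hm, hy⟩ := hy
    refine ⟨n * m, mul_ne_zero hn hm, ?_⟩
    rw [smul_add]
    refine S.add_mem ?_ ?_
    · rw [mul_comm, mul_smul]; exact S.smul_mem _ hx
    · rw [mul_smul]; exact S.smul_mem _ hy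
  | smul a x _ hx =>
    obtain ⟨n, hn, hx⟩ := hx
    refine ⟨n * a.den, mul_ne_zero hn (by exact_mod_cast a.den_ne_zero), ?_⟩
    have : (n * (a.den : ℤ)) • a • x = a.num • (n • x) := by
      rw [← Int.cast_smul_eq_zsmul ℚ, ← Int.cast_smul_eq_zsmul ℚ a.num,
        ← Int.cast_smul_eq_zsmul ℚ n, smul_smul, smul_smul]
      congr 1
      have := Rat.den_mul_eq_num a
      push_cast
      rw [mul_assoc, this, mul_comm]
    rw [this]
    exact S.smul_mem _ hx

theorem form_zsmul {V : Type*} [AddCommGroup V] [Module ℚ V] (f : V →ₗ[ℚ] ℚ) (n : ℤ) (v : V) :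
    f (n • v) = n * f v := by
  rw [map_zsmul, zsmul_eq_mul]

/-- A functional on a full lattice extends to the whole space. -/
theorem extend_fun {V : Type*} [AddCommGroup V] [Module ℚ V]
    (L : Submodule ℤ V) (hfg : L.FG)
    (hLspan : Submodule.span ℚ (L : Set V) = ⊤) (g : L →ₗ[ℤ] ℚ) :
    ∃ F : V →ₗ[ℚ] ℚ, ∀ x : L, F x = g x := by
  have : Module.Finite ℤ L := Module.Finite.iff_fg.mpr hfg
  have : Module.IsTorsionFree ℤ V := Module.IsTorsionFree.trans_faithfulSMul ℤ ℚ V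
  let b := Module.Free.chooseBasis ℤ L
  have hli : LinearIndependent ℤ (fun i => (b i : V)) :=
    b.linearIndependent.map' L.subtype (Submodule.ker_subtype L)
  have hliQ : LinearIndependent ℚ (fun i => (b i : V)) :=
    (LinearIndependent.iff_fractionRing ℤ ℚ).mp hli
  have hmem : ∀ x : L, (x : V) ∈ Submodule.span ℚ (Set.range (fun i => (b i : V))) := by
    intro x
    rw [← b.sum_repr x]
    push_cast
    refine Submodule.sum_mem _ fun i _ => ?_
    rw [← Int.cast_smul_eq_zsmul ℚ]
    exact Submodule.smul_mem _ _ (Submodule.subset_span ⟨i, rfl⟩)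
  have hsp : ⊤ ≤ Submodule.span ℚ (Set.range (fun i => (b i : V))) := by
    rw [← hLspan, Submodule.span_le]
    intro x hx
    exact hmem ⟨x, hx⟩
  let B := Module.Basis.mk hliQ hsp
  let F : V →ₗ[ℚ] ℚ := B.constr ℚ (fun i => g (b i))
  have hF : ∀ i, F (b i : V) = g (b i) := by
    intro i
    have := B.constr_basis ℚ (fun i => g (b i)) i
    rwa [Module.Basis.mk_apply] at this
  refine ⟨F, ?_⟩
  have key : (F.restrictScalars ℤ).comp L.subtype = g := b.ext fun i => hF i
  intro x
  exact LinearMap.congr_fun key x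

theorem repr_fun {V : Type*} [AddCommGroup V] [Module ℚ V] [FiniteDimensional ℚ V]
    (Φ : V →ₗ[ℚ] V →ₗ[ℚ] ℚ)
    (hnd : ∀ v : V, (∀ w : V, Φ v w = 0) → v = 0) (F : V →ₗ[ℚ] ℚ) :
    ∃ v, Φ v = F := by
  have hinj : Function.Injective Φ := by
    rw [injective_iff_map_eq_zero]
    intro a ha
    exact hnd a fun w => by rw [ha]; rfl
  have hdim : Module.finrank ℚ V = Module.finrank ℚ (V →ₗ[ℚ] ℚ) :=
    (Subspace.dual_finrank_eq (K := ℚ) (V := V)).symm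
  exact (LinearMap.injective_iff_surjective_of_finrank_eq_finrank hdim).mp hinj F

/-- A subspace is its own double complement. -/
theorem perp_perp {V : Type*} [AddCommGroup V] [Module ℚ V] [FiniteDimensional ℚ V]
    (Φ : V →ₗ[ℚ] V →ₗ[ℚ] ℚ) (hsymm : ∀ v w : V, Φ v w = Φ w v)
    (hnd : ∀ v : V, (∀ w : V, Φ v w = 0) → v = 0) (U : Submodule ℚ V) (v : V)
    (hv : ∀ c ∈ perp Φ U, Φ v c = 0) : v ∈ U := by
  by_contra hvU
  obtain ⟨f, hf, hfU⟩ := Submodule.exists_le_ker_of_notMem hvU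
  obtain ⟨c, hc⟩ := repr_fun Φ hnd f
  apply hf
  rw [← hc, hsymm]
  apply hv
  intro u hu
  rw [hsymm, hc]
  exact hfU hu

theorem even_integral {V : Type*} [AddCommGroup V] [Module ℚ V]
    (Φ : V →ₗ[ℚ] V →ₗ[ℚ] ℚ) (hsymm : ∀ v w : V, Φ v w = Φ w v) (L : Submodule ℤ V)
    (heven : ∀ x ∈ L, ∃ n : ℤ, Φ x x = 2 * (n : ℚ)) (x : V) (hx : x ∈ L) :
    x ∈ dualL Φ L := by
  intro y hy
  obtain ⟨a, ha⟩ := heven x hx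
  obtain ⟨b, hb⟩ := heven y hy
  obtain ⟨c, hc⟩ := heven (x + y) (L.add_mem hx hy)
  refine ⟨c - a - b, ?_⟩
  simp only [map_add, LinearMap.add_apply] at hc
  rw [hsymm y x] at hc
  push_cast
  linarith

theorem dual_add {V : Type*} [AddCommGroup V] [Module ℚ V]
    {Φ : V →ₗ[ℚ] V →ₗ[ℚ] ℚ} {L : Submodule ℤ V} {x y : V} (hx : x ∈ dualL Φ L)
    (hy : y ∈ dualL Φ L) : x + y ∈ dualL Φ L := by
  intro z hz
  obtain ⟨a, ha⟩ := hx z hz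
  obtain ⟨b, hb⟩ := hy z hz
  exact ⟨a + b, by simp [ha, hb]⟩

theorem dual_sub {V : Type*} [AddCommGroup V] [Module ℚ V]
    {Φ : V →ₗ[ℚ] V →ₗ[ℚ] ℚ} {L : Submodule ℤ V} {x y : V} (hx : x ∈ dualL Φ L)
    (hy : y ∈ dualL Φ L) : x - y ∈ dualL Φ L := by
  intro z hz
  obtain ⟨a, ha⟩ := hx z hz
  obtain ⟨b, hb⟩ := hy z hz
  exact ⟨a - b, by simp [ha, hb]⟩

/-- An integral functional on `L ∩ U^⊥` extends to one on `L`. -/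
theorem lift_dual {V : Type*} [AddCommGroup V] [Module ℚ V] [FiniteDimensional ℚ V]
    (Φ : V →ₗ[ℚ] V →ₗ[ℚ] ℚ)
    (hsymm : ∀ v w : V, Φ v w = Φ w v)
    (hnd : ∀ v : V, (∀ w : V, Φ v w = 0) → v = 0)
    (L : Submodule ℤ V) (hfg : L.FG)
    (hLspan : Submodule.span ℚ (L : Set V) = ⊤)
    (U : Submodule ℚ V) (w : V)
    (hw : ∀ x ∈ L, x ∈ perp Φ U → ∃ n : ℤ, Φ w x = n) :
    ∃ ν ∈ dualL Φ L, ν - w ∈ U := by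
  have : Module.Finite ℤ L := Module.Finite.iff_fg.mpr hfg
  have : Module.IsTorsionFree ℤ (V ⧸ perp Φ U) :=
    Module.IsTorsionFree.trans_faithfulSMul ℤ ℚ (V ⧸ perp Φ U)
  let q : L →ₗ[ℤ] (V ⧸ perp Φ U) := ((perp Φ U).mkQ.restrictScalars ℤ).comp L.subtype
  have : Module.Finite ℤ (LinearMap.range q) := inferInstance
  have : Module.Free ℤ (LinearMap.range q) := inferInstance
  obtain ⟨s, hs⟩ := Module.projective_lifting_property q.rangeRestrict LinearMap.id
    q.surjective_rangeRestrict
  let p : L →ₗ[ℤ] L := LinearMap.id - s.comp q.rangeRestrict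
  have hqs : ∀ y, q.rangeRestrict (s y) = y := fun y => LinearMap.congr_fun hs y
  have hp : ∀ x : L, (p x : V) ∈ perp Φ U := by
    intro x
    have h1 : q.rangeRestrict (p x) = 0 := by
      simp only [p, LinearMap.sub_apply, LinearMap.id_apply, LinearMap.comp_apply, map_sub, hqs,
        sub_self]
    have h2 : q (p x) = 0 := congrArg Subtype.val h1
    exact (Submodule.Quotient.mk_eq_zero _).mp h2
  have hp' : ∀ x : L, (x : V) ∈ perp Φ U → p x = x := by
    intro x hx
    have h2 : q x = 0 := (Submodule.Quotient.mk_eq_zero _).mpr hx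
    have h1 : q.rangeRestrict x = 0 := Subtype.ext h2
    simp [p, h1]
  obtain ⟨F, hF⟩ := extend_fun L hfg hLspan
    ((((Φ w).restrictScalars ℤ).comp L.subtype).comp p)
  obtain ⟨ν, rfl⟩ := repr_fun Φ hnd F
  refine ⟨ν, ?_, ?_⟩
  · intro x hx
    obtain ⟨n, hn⟩ := hw _ (p ⟨x, hx⟩).2 (hp _)
    exact ⟨n, (hF ⟨x, hx⟩).trans hn⟩
  · apply perp_perp Φ hsymm hnd
    intro c hc
    obtain ⟨n, hn, hnc⟩ := clear_denom L c (by rw [hLspan]; trivial)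
    have hncU : n • c ∈ perp Φ U := by
      rw [← Int.cast_smul_eq_zsmul ℚ]
      exact Submodule.smul_mem _ _ hc
    have h := hF ⟨n • c, hnc⟩
    simp only [LinearMap.comp_apply] at h
    rw [hp' ⟨n • c, hnc⟩ hncU] at h
    have h3 : Φ ν (n • c) = Φ w (n • c) := h
    rw [form_zsmul, form_zsmul] at h3
    have := mul_left_cancel₀ (by exact_mod_cast hn : (n : ℚ) ≠ 0) h3
    simp [this]

/-- Dual bases: any vector with integral pairing against `It` pairs like some element of `I`. -/
theorem exists_rep {V : Type*} [AddCommGroup V] [Module ℚ V]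
    (Φ : V →ₗ[ℚ] V →ₗ[ℚ] ℚ)
    (I : Submodule ℤ V) (hfg : I.FG) (It : Submodule ℤ V) (huni : Unimodular Φ It I)
    (l : V) (hl : ∀ x ∈ It, ∃ n : ℤ, Φ x l = n) :
    ∃ i ∈ I, ∀ x ∈ It, Φ x l = Φ x i := by
  classical
  have : Module.Finite ℤ I := Module.Finite.iff_fg.mpr hfg
  have : Module.IsTorsionFree ℤ V := Module.IsTorsionFree.trans_faithfulSMul ℤ ℚ V
  let b := Module.Free.chooseBasis ℤ I
  choose x hx using fun j => (huni.2 (b.coord j)).exists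
  choose n hn using fun j => hl (x j) (hx j).1
  refine ⟨((∑ j, n j • b j : I) : V), Subtype.property _, ?_⟩
  intro y hy
  choose m hm using fun j => huni.1 y hy (b j) (b j).2
  have hyx : y = ∑ j, m j • x j := by
    have ext1 : ∀ z ∈ It, (∀ j, Φ z (b j : V) = m j) →
        z ∈ It ∧ ∀ i : I, Φ z (i : V) = ((b.constr ℤ m) i : ℚ) := by
      intro z hz hzb
      refine ⟨hz, ?_⟩
      have key : ((Φ z).restrictScalars ℤ).comp I.subtype
          = (Int.castAddHom ℚ).toIntLinearMap.comp (b.constr ℤ m) := by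
        apply b.ext
        intro j
        have h2 := b.constr_basis ℤ m j
        simp only [LinearMap.comp_apply, h2]
        exact hzb j
      intro i
      exact LinearMap.congr_fun key i
    refine (huni.2 (b.constr ℤ m)).unique (ext1 y hy hm) (ext1 _ (It.sum_mem fun j _ => It.smul_mem _ (hx j).1) ?_)
    intro k
    rw [map_sum, LinearMap.sum_apply]
    have : ∀ j, (Φ (m j • x j)) (b k : V) = if j = k then (m j : ℚ) else 0 := by
      intro j
      rw [map_zsmul, LinearMap.smul_apply, (hx j).2 (b k), zsmul_eq_mul]
      by_cases h : j = k
      · subst h; simp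
      · simp [h]
    simp only [this, Finset.sum_ite_eq', Finset.mem_univ, if_true]
  have hxi : ∀ j, Φ (x j) ((∑ j, n j • b j : I) : V) = n j := by
    intro j
    rw [(hx j).2]
    simp [Finsupp.single_apply]
  rw [hyx]
  simp only [map_sum, LinearMap.sum_apply, map_zsmul, LinearMap.smul_apply, hxi, hn]

/-- **Theorem: decomposition of `L*` and `L + I^⊥_{L*}`.** With the
same data, there is a ℤ-linear map `ι̂ : Λ̃*/Λ̃ → U/I_{L*}` (encoded as a function
`ι̂ : V → V` mapping `Λ̃*` into `U`, well-defined modulo `Λ̃` and additive modulo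
`I_{L*}`) such that `u + w + ũ ∈ L*` iff `w ∈ Λ̃*`, `ũ ∈ Ĩ`, and
`u ≡ −ι̂(w) mod I_{L*}`, and `u + w + ũ ∈ L + I^⊥_{L*}` iff `w ∈ Λ̃*`, `ũ ∈ Ĩ_L`,
and `u ≡ −ι̂(w) mod I_{L*}`. -/
theorem stmt15 {V : Type*} [AddCommGroup V] [Module ℚ V] [FiniteDimensional ℚ V]
    (Φ : V →ₗ[ℚ] V →ₗ[ℚ] ℚ)
    (hsymm : ∀ v w : V, Φ v w = Φ w v)
    (hnd : ∀ v : V, (∀ w : V, Φ v w = 0) → v = 0)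
    (L : Submodule ℤ V) (hfg : L.FG)
    (hLspan : Submodule.span ℚ (L : Set V) = ⊤)
    (heven : ∀ x ∈ L, ∃ n : ℤ, Φ x x = 2 * (n : ℚ))
    (U : Submodule ℚ V)
    (hUiso : ∀ u ∈ U, ∀ u' ∈ U, Φ u u' = 0)
    (I : Submodule ℤ V) (hI : I = U.restrictScalars ℤ ⊓ L)
    (hU : U = Submodule.span ℚ (I : Set V))
    (It : Submodule ℤ V) (hItdual : (It : Set V) ⊆ dualL Φ L)
    (hItuni : Unimodular Φ It I)
    (Ut : Submodule ℚ V) (hUt : Ut = Submodule.span ℚ (It : Set V))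
    (Wt : Submodule ℚ V) (hWt : Wt = perp Φ (U ⊔ Ut)) :
    ∃ ιh : V → V,
      -- ι̂ maps Λ̃* into U
      (∀ w ∈ lambdaStarSet Φ L Wt, ιh w ∈ U) ∧
      -- ι̂ is well-defined modulo Λ̃, with values modulo I_{L*}
      (∀ w ∈ lambdaStarSet Φ L Wt, ∀ w' ∈ lambdaStarSet Φ L Wt,
        w - w' ∈ lambdaSet L Wt → ιh w - ιh w' ∈ ILstarSet Φ L U) ∧
      -- ι̂ is additive modulo I_{L*} (i.e. gives a ℤ-linear map Λ̃*/Λ̃ → U/I_{L*})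
      (∀ w ∈ lambdaStarSet Φ L Wt, ∀ w' ∈ lambdaStarSet Φ L Wt,
        ιh (w + w') - ιh w - ιh w' ∈ ILstarSet Φ L U) ∧
      -- characterizations of membership in L* and in L + I^⊥_{L*}
      (∀ u ∈ U, ∀ w ∈ Wt, ∀ t ∈ Ut,
        ((u + w + t ∈ dualL Φ L ↔
          w ∈ lambdaStarSet Φ L Wt ∧ t ∈ It ∧ u + ιh w ∈ ILstarSet Φ L U) ∧
         ((∃ l ∈ L, ∃ c : V, (c ∈ perp Φ U ∧ c ∈ dualL Φ L) ∧ u + w + t = l + c) ↔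
          w ∈ lambdaStarSet Φ L Wt ∧ t ∈ ItLSet Φ L I It ∧
          u + ιh w ∈ ILstarSet Φ L U))) := by
  have hIU : ∀ y ∈ I, y ∈ U := by
    intro y hy
    rw [hU]; exact Submodule.subset_span hy
  have hIL : ∀ y ∈ I, y ∈ L := by
    intro y hy
    rw [hI] at hy; exact hy.2
  have hIfg : I.FG := by
    have : Module.Finite ℤ L := Module.Finite.iff_fg.mpr hfg
    have : IsNoetherian ℤ L := inferInstance
    exact Submodule.FG.of_le hfg (fun y hy => hIL y hy)
  have hint := even_integral Φ hsymm L heven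
  have hWU : ∀ w ∈ Wt, ∀ u ∈ U, Φ w u = 0 := by
    intro w hw u hu
    rw [hWt] at hw
    rw [hsymm]
    exact hw u (Submodule.mem_sup_left hu)
  have hWUt : ∀ w ∈ Wt, ∀ u ∈ Ut, Φ w u = 0 := by
    intro w hw u hu
    rw [hWt] at hw
    rw [hsymm]
    exact hw u (Submodule.mem_sup_right hu)
  have hItUt : ∀ t ∈ It, t ∈ Ut := by
    intro t ht
    rw [hUt]; exact Submodule.subset_span ht
  -- vanishing on I forces vanishing on U
  have hspanU : ∀ v, (∀ y ∈ I, Φ v y = 0) → ∀ u ∈ U, Φ v u = 0 := by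
    intro v hv u hu
    rw [hU] at hu
    have : Submodule.span ℚ (I : Set V) ≤ LinearMap.ker (Φ v) :=
      Submodule.span_le.mpr hv
    exact this hu
  have hspanUt : ∀ v, (∀ y ∈ It, Φ v y = 0) → ∀ u ∈ Ut, Φ v u = 0 := by
    intro v hv u hu
    rw [hUt] at hu
    have : Submodule.span ℚ (It : Set V) ≤ LinearMap.ker (Φ v) :=
      Submodule.span_le.mpr hv
    exact this hu
  -- Ut meets the complement of U trivially
  have hUt0 : ∀ t ∈ Ut, (∀ y ∈ I, Φ t y = 0) → t = 0 := by
    intro t ht h0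
    rw [hUt] at ht
    obtain ⟨n, hn, hnt⟩ := clear_denom It t ht
    have := (hItuni.2 0).unique (y₁ := n • t) (y₂ := 0)
      ⟨hnt, fun y => by simp [h0 y y.2]⟩ ⟨It.zero_mem, fun y => by simp⟩
    rw [← Int.cast_smul_eq_zsmul ℚ] at this
    exact (smul_eq_zero.mp this).resolve_left (by exact_mod_cast hn)
  have hlift : ∀ w ∈ lambdaStarSet Φ L Wt, ∃ ν ∈ dualL Φ L, ν - w ∈ U := by
    intro w hw
    apply lift_dual Φ hsymm hnd L hfg hLspan U w
    intro x hx hxU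
    obtain ⟨i, hi, hix⟩ := exists_rep Φ I hIfg It hItuni x (fun t ht => hItdual ht x hx)
    have hmem : x - i ∈ Wt := by
      rw [hWt]
      intro z hz
      obtain ⟨a, ha, c, hc, rfl⟩ := Submodule.mem_sup.mp hz
      have h1 : Φ a (x - i) = 0 := by
        rw [map_sub, hxU a ha, hUiso a ha i (hIU i hi), sub_zero]
      have h2 : Φ c (x - i) = 0 := by
        rw [hsymm]
        refine hspanUt _ ?_ c hc
        intro y hy
        rw [hsymm, map_sub, hix y hy, sub_self]
      rw [map_add, LinearMap.add_apply, h1, h2, add_zero]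
    obtain ⟨n, hn⟩ := hw.2 (x - i) (L.sub_mem hx (hIL i hi)) hmem
    refine ⟨n, ?_⟩
    rw [← hn, map_sub, hWU w hw.1 i (hIU i hi), sub_zero]
  classical
  choose ν hν1 hν2 using hlift
  let ιh : V → V := fun w => if h : w ∈ lambdaStarSet Φ L Wt then w - ν w h else 0
  have hι : ∀ w (h : w ∈ lambdaStarSet Φ L Wt), ιh w = w - ν w h := fun w h => dif_pos h
  have hιU : ∀ w ∈ lambdaStarSet Φ L Wt, ιh w ∈ U := by
    intro w hw
    rw [hι w hw, ← neg_sub]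
    exact U.neg_mem (hν2 w hw)
  have hιL : ∀ w ∈ lambdaStarSet Φ L Wt, w - ιh w ∈ dualL Φ L := by
    intro w hw
    rw [hι w hw, sub_sub_cancel]
    exact hν1 w hw
  have first : ∀ u ∈ U, ∀ w ∈ Wt, ∀ t ∈ Ut, (u + w + t ∈ dualL Φ L ↔
          w ∈ lambdaStarSet Φ L Wt ∧ t ∈ It ∧ u + ιh w ∈ ILstarSet Φ L U) := by
    intro u hu w hw t ht
    constructor
    · intro h
      have hwS : w ∈ lambdaStarSet Φ L Wt := by
        refine ⟨hw, fun y hy hyW => ?_⟩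
        obtain ⟨n, hn⟩ := h y hy
        refine ⟨n, ?_⟩
        rw [← hn]
        simp [hsymm u y, hsymm t y, hWU y hyW u hu, hWUt y hyW t ht]
      have htI : ∀ y ∈ I, Φ (u + w + t) y = Φ t y := by
        intro y hy
        simp [hUiso u hu y (hIU y hy), hWU w hw y (hIU y hy)]
      have htIt : t ∈ It := by
        choose f hf using fun y : I => h y (hIL y y.2)
        let g : I →ₗ[ℤ] ℤ := AddMonoidHom.toIntLinearMap
          (AddMonoidHom.mk' f (by
            intro a b
            have : (f (a + b) : ℚ) = f a + f b := by
              rw [← hf, ← hf, ← hf]; simp only [Submodule.coe_add, map_add]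
            exact_mod_cast this))
        obtain ⟨t', ⟨ht', hpair⟩, -⟩ := hItuni.2 g
        have : t - t' = 0 := by
          apply hUt0 _ (Ut.sub_mem ht (hItUt t' ht'))
          intro y hy
          have e1 := hpair ⟨y, hy⟩
          have e2 := hf ⟨y, hy⟩
          have e3 : Φ t' y = (f ⟨y, hy⟩ : ℚ) := e1
          rw [map_sub, LinearMap.sub_apply, e3, ← e2, htI y hy, sub_self]
        rw [sub_eq_zero.mp this]; exact ht'
      refine ⟨hwS, htIt, U.add_mem hu (hιU w hwS), ?_⟩
      have := dual_sub (dual_sub h (hItdual htIt)) (hιL w hwS)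
      convert this using 1
      abel
    · rintro ⟨hwS, htIt, -, h⟩
      have := dual_add (dual_add h (hιL w hwS)) (hItdual htIt)
      convert this using 1
      abel
  refine ⟨ιh, hιU, ?_, ?_, ?_⟩
  · intro w hw w' hw' h
    refine ⟨U.sub_mem (hιU w hw) (hιU w' hw'), ?_⟩
    have := dual_sub (dual_add (hint _ h.1) (hιL w' hw')) (hιL w hw)
    convert this using 1
    abel
  · intro w hw w' hw'
    have hs : w + w' ∈ lambdaStarSet Φ L Wt := by
      refine ⟨Wt.add_mem hw.1 hw'.1, fun y hy hyW => ?_⟩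
      obtain ⟨a, ha⟩ := hw.2 y hy hyW
      obtain ⟨b, hb⟩ := hw'.2 y hy hyW
      exact ⟨a + b, by simp [ha, hb]⟩
    refine ⟨U.sub_mem (U.sub_mem (hιU _ hs) (hιU w hw)) (hιU w' hw'), ?_⟩
    have := dual_sub (dual_add (hιL w hw) (hιL w' hw')) (hιL _ hs)
    convert this using 1
    abel
  · intro u hu w hw t ht
    refine ⟨first u hu w hw t ht, ?_⟩
    have htI : ∀ y ∈ I, Φ (u + w + t) y = Φ t y := by
      intro y hy
      simp [hUiso u hu y (hIU y hy), hWU w hw y (hIU y hy)]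
    constructor
    · rintro ⟨l, hl, c, ⟨hcU, hcL⟩, he⟩
      have hd : u + w + t ∈ dualL Φ L := by
        rw [he]; exact dual_add (hint l hl) hcL
      obtain ⟨h1, h2, h3⟩ := (first u hu w hw t ht).mp hd
      refine ⟨h1, ⟨h2, l, hl, fun y hy => ?_⟩, h3⟩
      rw [← htI y hy, he, map_add, LinearMap.add_apply, hsymm c y, hcU y (hIU y hy), add_zero]
    · rintro ⟨h1, ⟨h2, l, hl, hp⟩, h3⟩
      have hd := (first u hu w hw t ht).mpr ⟨h1, h2, h3⟩
      refine ⟨l, hl, u + w + t - l, ⟨?_, dual_sub hd (hint l hl)⟩, by abel⟩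
      intro z hz
      rw [hsymm]
      refine hspanU _ ?_ z hz
      intro y hy
      rw [map_sub, LinearMap.sub_apply, htI y hy, hp y hy, sub_self]
end

section
/- Let L be an even lattice in V, U an isotropic subspace with U = ℚ-span of I where I = U ∩ L, Ĩ ⊆ L* a ℤ-submodule pairing unimodularly with I, Ũ = ℚ-span of Ĩ, W̃ = (U + Ũ)^⊥, Λ̃ = L ∩ W̃, Λ̃* = {w ∈ W̃ : (w, λ) ∈ ℤ for all λ ∈ Λ̃}, and I_{L*} = U ∩ L*. Let M : U → U be a ℚ-linear automorphism with M(I) = I, det M = 1, and M(u) − u ∈ I for every u ∈ I_{L*}, and let γ : W̃ → W̃ be a linear automorphism preserving the restricted bilinear form with γ(Λ̃) = Λ̃ and γ(w) − w ∈ Λ̃ for every w ∈ Λ̃*. Then there exists an isometry A ∈ O(V) such that A(L) = L, A(μ) − μ ∈ L for every μ ∈ L*, A(U) = U, A|_U = M, and A(w) − γ(w) ∈ U for every w ∈ W̃. -/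
theorem aux_rep {V : Type*} [AddCommGroup V] [Module ℚ V] [FiniteDimensional ℚ V]
    (Φ : V →ₗ[ℚ] V →ₗ[ℚ] ℚ)
    (hsymm : ∀ v w : V, Φ v w = Φ w v)
    (hnd : ∀ v : V, (∀ w : V, Φ v w = 0) → v = 0)
    (L : Submodule ℤ V) (hfg : L.FG)
    (hLspan : Submodule.span ℚ (L : Set V) = ⊤)
    (U : Submodule ℚ V) (h : V →ₗ[ℚ] ℚ)
    (hh : ∀ u ∈ U, u ∈ dualL Φ L → ∃ n : ℤ, h u = n) :
    ∃ ν ∈ L, ∀ u ∈ U, u ∈ dualL Φ L → Φ ν u = h u := by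
  classical
  have : Module.Finite ℤ L := Module.Finite.iff_fg.mpr hfg
  have : Module.IsTorsionFree ℤ V := Module.IsTorsionFree.trans_faithfulSMul ℤ ℚ V
  have : Module.Free ℤ L := inferInstance
  let e := Module.Free.chooseBasis ℤ L
  let ι := Module.Free.ChooseBasisIndex ℤ L
  have hli : LinearIndependent ℤ (fun i => (e i : V)) :=
    e.linearIndependent.map' L.subtype (Submodule.ker_subtype L)
  have hliQ : LinearIndependent ℚ (fun i => (e i : V)) :=
    (LinearIndependent.iff_fractionRing ℤ ℚ).mp hli
  have hsp : ∀ x ∈ L, x ∈ Submodule.span ℚ (Set.range (fun i => (e i : V))) := by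
    intro x hx
    have h1 := congrArg (Subtype.val) (e.sum_repr ⟨x, hx⟩)
    simp only [Submodule.coe_sum, Submodule.coe_smul] at h1
    rw [← h1]
    refine Submodule.sum_mem _ fun i _ => ?_
    rw [← Int.cast_smul_eq_zsmul ℚ]
    exact Submodule.smul_mem _ _ (Submodule.subset_span ⟨i, rfl⟩)
  let E : Module.Basis ι ℚ V := Module.Basis.mk hliQ (by
    rw [← hLspan]; exact Submodule.span_le.mpr hsp)
  have hE : ∀ i, E i = e i := fun i => by simp [E]
  have hN : LinearMap.BilinForm.Nondegenerate (Φ : LinearMap.BilinForm ℚ V) := by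
    refine ⟨hnd, fun v hv => hnd v fun w => ?_⟩
    rw [hsymm]; exact hv w
  let d := LinearMap.BilinForm.dualBasis (Φ : LinearMap.BilinForm ℚ V) hN E
  have hd : ∀ i j, Φ (d i) (e j : V) = if j = i then 1 else 0 := by
    intro i j
    rw [← hE]
    exact LinearMap.BilinForm.apply_dualBasis_left hN E i j
  have hdexp : ∀ v : V, v = ∑ k, Φ v (e k : V) • d k := by
    intro v
    rw [← sub_eq_zero]
    apply hnd
    intro w
    have : Φ (v - ∑ k, Φ v (e k : V) • d k) = 0 := by
      apply E.ext
      intro j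
      simp [hE, hd]
    rw [this]; rfl
  let D : (ι → ℤ) →ₗ[ℤ] V := Fintype.linearCombination ℤ (fun i => d i)
  have hD : ∀ x, D x = ∑ k, x k • d k := fun x => Fintype.linearCombination_apply ℤ _ x
  have hDdual : ∀ x, D x ∈ dualL Φ L := by
    intro x y hy
    have h1 := congrArg (Subtype.val) (e.sum_repr ⟨y, hy⟩)
    simp only [Submodule.coe_sum, Submodule.coe_smul] at h1
    rw [← h1, hD]
    refine ⟨∑ k, x k * e.repr ⟨y, hy⟩ k, ?_⟩
    simp [hd, mul_comm]
    rfl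
  let g : (ι → ℤ) →ₗ[ℤ] (V ⧸ U) := (U.mkQ.restrictScalars ℤ).comp D
  have : Module.IsTorsionFree ℤ (V ⧸ U) :=
    Module.IsTorsionFree.trans_faithfulSMul ℤ ℚ (V ⧸ U)
  have : Module.Free ℤ (LinearMap.range g) := inferInstance
  obtain ⟨σ, hσ⟩ := Module.projective_lifting_property g.rangeRestrict LinearMap.id
    g.surjective_rangeRestrict
  let π : (ι → ℤ) →ₗ[ℤ] (ι → ℤ) := LinearMap.id - σ.comp g.rangeRestrict
  have hπU : ∀ x, D (π x) ∈ U := by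
    intro x
    have h2 : g (π x) = 0 := by
      have h3 := congrArg Subtype.val (LinearMap.congr_fun hσ (g.rangeRestrict x))
      simp at h3
      simp [π, h3]
    simpa [g] using h2
  have hπid : ∀ x, D x ∈ U → π x = x := by
    intro x hx
    have h2 : g.rangeRestrict x = 0 := by
      apply Subtype.ext
      simpa [g] using hx
    simp [π, h2]
  choose n hn using fun x => hh (D (π x)) (hπU x) (hDdual _)
  refine ⟨∑ k, n (Pi.single k 1) • (e k : V), L.sum_mem fun k _ => L.smul_mem _ (e k).2, ?_⟩
  intro u hu hud
  choose m hm using fun k => hud (e k : V) (e k).2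
  have hu1 : u = D m := by
    conv_lhs => rw [hdexp u]
    rw [hD]
    refine Finset.sum_congr rfl fun k _ => ?_
    rw [hm, Int.cast_smul_eq_zsmul]
  have h3 : h u = ∑ k, (m k : ℚ) * n (Pi.single k 1) := by
    have : π m = m := hπid m (hu1 ▸ hu)
    rw [hu1]
    conv_lhs => rw [← this, pi_eq_sum_univ' m]
    simp only [map_sum, map_smul]
    refine Finset.sum_congr rfl fun k _ => ?_
    have h5 := hn (Pi.single k 1)
    rw [← h5, map_zsmul, zsmul_eq_mul]
  rw [h3, hsymm]
  simp [hm, mul_comm]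
  rfl

theorem aux_c {n : ℕ} (e : Fin n → Fin n → ℤ) (hs : ∀ i j, e i j = e j i)
    (hd : ∀ i, ∃ k, e i i = 2 * k) : ∃ c : Fin n → Fin n → ℤ, ∀ i j, c i j + c j i = - e i j := by
  choose k hk using hd
  refine ⟨fun i j => if i < j then - e i j else if i = j then - k i else 0, ?_⟩
  intro i j
  rcases lt_trichotomy i j with h | h | h
  · simp [h, h.not_gt, h.ne']
  · subst h; simp [hk]; ring
  · simp [h, h.not_gt, h.ne', hs i j]

/-- **lifting to the discriminant kernel.** With `L`, `U`, `I`, `Ĩ`,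
`Ũ`, `W̃`, `Λ̃`, `Λ̃*`, `I_{L*}` as in the context, given `M ∈ SL(I_{L*}, I)`
(an automorphism of `U` preserving `I`, of determinant 1, with `M(u) − u ∈ I` for
`u ∈ I_{L*}`) and `γ ∈ Γ_Λ` (an isometry of `W̃` preserving `Λ̃` with
`γ(w) − w ∈ Λ̃` for `w ∈ Λ̃*`), there is an isometry `A` of `V` with `A(L) = L`,
`A(μ) − μ ∈ L` for `μ ∈ L*`, `A(U) = U`, `A|_U = M`, and `A(w) − γ(w) ∈ U` for
`w ∈ W̃`. -/
theorem stmt18 {V : Type*} [AddCommGroup V] [Module ℚ V] [FiniteDimensional ℚ V]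
    (Φ : V →ₗ[ℚ] V →ₗ[ℚ] ℚ)
    (hsymm : ∀ v w : V, Φ v w = Φ w v)
    (hnd : ∀ v : V, (∀ w : V, Φ v w = 0) → v = 0)
    (L : Submodule ℤ V) (hfg : L.FG)
    (hLspan : Submodule.span ℚ (L : Set V) = ⊤)
    (heven : ∀ x ∈ L, ∃ n : ℤ, Φ x x = 2 * (n : ℚ))
    (U : Submodule ℚ V)
    (hUiso : ∀ u ∈ U, ∀ u' ∈ U, Φ u u' = 0)
    (I : Submodule ℤ V) (hI : I = U.restrictScalars ℤ ⊓ L)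
    (hU : U = Submodule.span ℚ (I : Set V))
    (It : Submodule ℤ V) (hItdual : (It : Set V) ⊆ dualL Φ L)
    (hItuni : Unimodular Φ It I)
    (Ut : Submodule ℚ V) (hUt : Ut = Submodule.span ℚ (It : Set V))
    (Wt : Submodule ℚ V) (hWt : Wt = perp Φ (U ⊔ Ut))
    -- M ∈ SL(I_{L*}, I):
    (M : ↥U ≃ₗ[ℚ] ↥U)
    (hMI : ∀ x : ↥U, (x : V) ∈ I ↔ (M x : V) ∈ I)
    (hMdet : LinearMap.det M.toLinearMap = 1)
    (hMILstar : ∀ x : ↥U, (x : V) ∈ dualL Φ L → (M x : V) - (x : V) ∈ I)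
    -- γ ∈ Γ_Λ, i.e. an isometry of W̃ preserving Λ̃ and trivial on Λ̃*/Λ̃:
    (γ : ↥Wt ≃ₗ[ℚ] ↥Wt)
    (hγiso : ∀ x y : ↥Wt, Φ (γ x : V) (γ y : V) = Φ (x : V) (y : V))
    (hγΛ : ∀ x : ↥Wt, (x : V) ∈ L → (γ x : V) ∈ L)
    (hγΛ' : ∀ x : ↥Wt, (x : V) ∈ L → (γ.symm x : V) ∈ L)
    (hγstar : ∀ x : ↥Wt, (x : V) ∈ lambdaStarSet Φ L Wt →
      (γ x : V) - (x : V) ∈ lambdaSet L Wt) :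
    ∃ A : V ≃ₗ[ℚ] V,
      (∀ v w : V, Φ (A v) (A w) = Φ v w) ∧
      (∀ x : V, x ∈ L ↔ A x ∈ L) ∧
      (∀ μ ∈ dualL Φ L, A μ - μ ∈ L) ∧
      (∀ x : V, x ∈ U ↔ A x ∈ U) ∧
      (∀ x : ↥U, A (x : V) = (M x : V)) ∧
      (∀ w : ↥Wt, A (w : V) - (γ w : V) ∈ U) := by
  classical
  have hIU : ∀ x ∈ I, x ∈ U := fun x hx => by rw [hI] at hx; exact hx.1
  have hIL : ∀ x ∈ I, x ∈ L := fun x hx => by rw [hI] at hx; exact hx.2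
  -- integrality of L
  have hLL : ∀ x ∈ L, x ∈ dualL Φ L := by
    intro x hx y hy
    obtain ⟨a, ha⟩ := heven x hx
    obtain ⟨b, hb⟩ := heven y hy
    obtain ⟨c, hc⟩ := heven (x + y) (L.add_mem hx hy)
    refine ⟨c - a - b, ?_⟩
    simp only [map_add, LinearMap.add_apply] at hc
    rw [hsymm y x] at hc
    push_cast
    linarith
  -- basis of I
  have hfgI : I.FG := by
    have : IsNoetherian ℤ L := by
      have : Module.Finite ℤ L := Module.Finite.iff_fg.mpr hfg
      infer_instance
    have hle : I ≤ L := fun x hx => hIL x hx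
    exact (isNoetherian_submodule.mp this) I hle
  have : Module.Finite ℤ I := Module.Finite.iff_fg.mpr hfgI
  have : Module.IsTorsionFree ℤ V := Module.IsTorsionFree.trans_faithfulSMul ℤ ℚ V
  let B := Module.finBasis ℤ I
  obtain ⟨n, hn⟩ : ∃ n, n = Module.finrank ℤ I := ⟨_, rfl⟩
  let b : Fin (Module.finrank ℤ I) → V := fun i => (B i : V)
  have hbI : ∀ i, b i ∈ I := fun i => (B i).2
  have hbU : ∀ i, b i ∈ U := fun i => hIU _ (hbI i)
  choose t ht htu using fun i => hItuni.2 (B.coord i)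
  simp only at ht htu
  have htI : ∀ i, t i ∈ It := fun i => (ht i).1
  have htb : ∀ i j, Φ (t i) (b j) = if j = i then 1 else 0 := by
    intro i j
    rw [(ht i).2 (B j)]
    simp [Finsupp.single_apply]
  have hbt : ∀ i j, Φ (b i) (t j) = if i = j then 1 else 0 := by
    intro i j
    rw [hsymm, htb]
  have hbb : ∀ u ∈ U, ∀ i, Φ u (b i) = 0 := fun u hu i => hUiso _ hu _ (hbU i)
  -- expansion in U
  have hexpU : ∀ u ∈ U, u = ∑ i, Φ (t i) u • b i := by
    intro u hu
    rw [hU] at hu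
    induction hu using Submodule.span_induction with
    | mem x hx =>
      have h1 := congrArg (Subtype.val) (B.sum_repr ⟨x, hx⟩)
      simp only [Submodule.coe_sum, Submodule.coe_smul] at h1
      conv_lhs => rw [← h1]
      refine Finset.sum_congr rfl fun i _ => ?_
      rw [(ht i).2 ⟨x, hx⟩, Int.cast_smul_eq_zsmul]
      rfl
    | zero => simp
    | add x y _ _ hx hy =>
      conv_lhs => rw [hx, hy]
      simp [add_smul, Finset.sum_add_distrib]
    | smul a x _ hx =>
      conv_lhs => rw [hx]
      simp [Finset.smul_sum, smul_smul]
  -- expansion in Ut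
  have hexpUt : ∀ x ∈ Ut, x = ∑ i, Φ x (b i) • t i := by
    intro x hx
    rw [hUt] at hx
    induction hx using Submodule.span_induction with
    | mem x hx =>
      choose m hm using fun i => hItuni.1 x hx (b i) (hbI i)
      have hy : ∑ i, Φ x (b i) • t i = ∑ i, m i • t i :=
        Finset.sum_congr rfl fun i _ => by rw [hm, Int.cast_smul_eq_zsmul]
      rw [hy]
      have hyI : ∑ i, m i • t i ∈ It := It.sum_mem fun i _ => It.smul_mem _ (htI i)
      choose k hk using fun y : I => hItuni.1 x hx y y.2
      let f : I →ₗ[ℤ] ℤ := AddMonoidHom.toIntLinearMap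
        { toFun := k
          map_zero' := by
            have := hk 0
            simp at this
            exact_mod_cast this.symm
          map_add' := fun y z => by
            have := hk (y + z)
            simp only [Submodule.coe_add, map_add, hk] at this
            exact_mod_cast this.symm }
      have hf : ∀ y, f y = k y := fun y => rfl
      refine (hItuni.2 f).unique ⟨hx, fun y => by rw [hk, hf]⟩ ⟨hyI, fun y => ?_⟩
      rw [hf, ← hk]
      conv_lhs => rw [hexpU y (hIU _ y.2)]
      conv_rhs => rw [hexpU y (hIU _ y.2)]
      simp [htb, hm, mul_comm]
    | zero => simp
    | add x y _ _ hx hy =>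
      conv_lhs => rw [hx, hy]
      simp [add_smul, Finset.sum_add_distrib]
    | smul a x _ hx =>
      conv_lhs => rw [hx]
      simp [Finset.smul_sum, smul_smul]
  have htUt : ∀ i, t i ∈ Ut := fun i => by rw [hUt]; exact Submodule.subset_span (htI i)
  -- membership in Wt
  have hWU : ∀ w ∈ Wt, ∀ u ∈ U, Φ w u = 0 := by
    intro w hw u hu
    rw [hWt] at hw
    rw [hsymm]; exact hw u (Submodule.mem_sup_left hu)
  have hWt' : ∀ w ∈ Wt, ∀ i, Φ w (t i) = 0 := by
    intro w hw i
    rw [hWt] at hw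
    rw [hsymm]; exact hw _ (Submodule.mem_sup_right (htUt i))
  have hWmem : ∀ w, (∀ i, Φ w (b i) = 0) → (∀ i, Φ w (t i) = 0) → w ∈ Wt := by
    intro w h1 h2
    rw [hWt]
    intro x hx
    obtain ⟨u, hu, y, hy, rfl⟩ := Submodule.mem_sup.mp hx
    rw [hexpU u hu, hexpUt y hy, hsymm]
    simp [h1, h2]
  -- the vectors ν
  have hν0 : ∀ i, ∃ ν ∈ L, ∀ u : U, Φ ν (M u : V) = Φ (t i) u - Φ (t i) (M u : V) := by
    intro i
    obtain ⟨h, hh⟩ := LinearMap.exists_extend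
      ((Φ (t i)).comp (U.subtype.comp (M.symm.toLinearMap - LinearMap.id)))
    have hh' : ∀ u : U, h u = Φ (t i) (M.symm u : V) - Φ (t i) u := by
      intro u
      have := LinearMap.congr_fun hh u
      simpa using this
    obtain ⟨ν, hν, hνu⟩ := aux_rep Φ hsymm hnd L hfg hLspan U h (by
      intro u hu hud
      have h1 := hMILstar ⟨u, hu⟩ hud
      have h2 : ((⟨u, hu⟩ - M.symm ⟨u, hu⟩ : U) : V) ∈ I := by
        rw [hMI]
        simpa using h1
      obtain ⟨k, hk⟩ := hItuni.1 (t i) (htI i) _ h2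
      refine ⟨-k, ?_⟩
      rw [hh' ⟨u, hu⟩]
      simp only [Submodule.coe_sub, map_sub] at hk
      push_cast
      rw [← hk]; ring)
    refine ⟨ν, hν, fun u => ?_⟩
    have key : ∀ v ∈ U, Φ ν v = h v := by
      intro v hv
      rw [hexpU v hv]
      simp only [map_sum, map_smul]
      refine Finset.sum_congr rfl fun j _ => ?_
      rw [hνu (b j) (hbU j) (hLL _ (hIL _ (hbI j)))]
    rw [key _ (M u).2, hh']
    simp
  choose ν0 hν0L hν0 using hν0
  -- Gram correction
  have hint : ∀ i, ∀ x ∈ L, ∃ k : ℤ, Φ (t i) x = k := fun i => hItdual (htI i)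
  choose e1 he1 using fun i j => hint i (ν0 j) (hν0L j)
  choose e2 he2 using fun i j => hLL (ν0 i) (hν0L i) (ν0 j) (hν0L j)
  choose e3 he3 using fun i => heven (ν0 i) (hν0L i)
  obtain ⟨c, hc⟩ := aux_c (fun i j => e1 i j + e1 j i + e2 i j)
    (fun i j => by
      have : e2 i j = e2 j i := by
        have := (he2 i j).symm.trans ((hsymm _ _).trans (he2 j i))
        exact_mod_cast this
      simp only [this]; ring)
    (fun i => ⟨e1 i i + e3 i, by
      have : e2 i i = 2 * e3 i := by
        have := (he2 i i).symm.trans (he3 i)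
        exact_mod_cast this
      simp only [this]; ring⟩)
  let Mb : Fin (Module.finrank ℤ I) → V := fun i => (M ⟨b i, hbU i⟩ : V)
  have hMbU : ∀ i, Mb i ∈ U := fun i => (M ⟨b i, hbU i⟩).2
  have hMbI : ∀ i, Mb i ∈ I := fun i => (hMI ⟨b i, hbU i⟩).mp (hbI i)
  let y : Fin (Module.finrank ℤ I) → V := fun i => ∑ j, c i j • Mb j
  have hyI : ∀ i, y i ∈ I := fun i => I.sum_mem fun j _ => I.smul_mem _ (hMbI j)
  have hyU : ∀ i, y i ∈ U := fun i => hIU _ (hyI i)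
  let ν : Fin (Module.finrank ℤ I) → V := fun i => ν0 i + y i
  have hνL : ∀ i, ν i ∈ L := fun i => L.add_mem (hν0L i) (hIL _ (hyI i))
  let s : Fin (Module.finrank ℤ I) → V := fun i => t i + ν i
  have hsM : ∀ i, ∀ u : U, Φ (s i) (M u : V) = Φ (t i) u := by
    intro i u
    simp only [s, ν, map_add, LinearMap.add_apply, hν0, hUiso _ (hyU i) _ (M u).2]
    ring
  have hs0M : ∀ i, ∀ u : U, Φ (t i + ν0 i) (M u : V) = Φ (t i) u := by
    intro i u
    simp only [map_add, LinearMap.add_apply, hν0]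
    ring
  have hsMb : ∀ i j, Φ (s i) (Mb j) = if j = i then 1 else 0 := by
    intro i j
    simp only [Mb, hsM, htb]
  have hys : ∀ i j, Φ (t j + ν0 j) (y i) = c i j := by
    intro i j
    have : ∀ k, Φ (t j + ν0 j) (Mb k) = if k = j then 1 else 0 := by
      intro k
      rw [hs0M]; exact htb j k
    simp only [y, map_sum, map_zsmul, this]
    simp
  have hss : ∀ i j, Φ (s i) (s j) = Φ (t i) (t j) := by
    intro i j
    have h1 : s i = (t i + ν0 i) + y i := by simp only [s, ν]; abel
    have h2 : s j = (t j + ν0 j) + y j := by simp only [s, ν]; abel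
    have h3 : Φ (s i) (s j) = Φ (t i + ν0 i) (t j + ν0 j) + c i j + c j i := by
      rw [h1, h2, map_add Φ, LinearMap.add_apply, map_add (Φ (t i + ν0 i)), map_add (Φ (y i)),
        hys, hsymm (y i) (t j + ν0 j), hys, hUiso _ (hyU i) _ (hyU j)]
      ring
    have h4 : (c i j : ℚ) + c j i = - (e1 i j + e1 j i + e2 i j) := by exact_mod_cast hc i j
    rw [h3]
    simp only [map_add, LinearMap.add_apply]
    rw [he1, he2, hsymm (ν0 i) (t j), he1]
    linarith
  -- the projections
  let p : V →ₗ[ℚ] V := ∑ i, (Φ (b i)).smulRight (t i)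
  have hp : ∀ v, p v = ∑ i, Φ (b i) v • t i := fun v => by simp [p]
  let q0 : V →ₗ[ℚ] V := (∑ i, (Φ (t i)).smulRight (b i)).comp (LinearMap.id - p)
  have hq0 : ∀ v, q0 v = ∑ i, Φ (t i) (v - p v) • b i := fun v => by simp [q0]
  let q : V →ₗ[ℚ] U := q0.codRestrict U fun v => by
    rw [hq0]; exact U.sum_mem fun i _ => U.smul_mem _ (hbU i)
  have hq : ∀ v, (q v : V) = ∑ i, Φ (t i) (v - p v) • b i := fun v => hq0 v
  let r : V →ₗ[ℚ] Wt := (LinearMap.id - p - q0).codRestrict Wt fun v => by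
    apply hWmem
    · intro i
      have := hbb (q0 v) (q v).2 i
      simp only [LinearMap.sub_apply, map_sub, this, LinearMap.id_apply]
      rw [hp]
      simp [htb, hsymm v (b i)]
    · intro i
      have h1 : Φ (q0 v) (t i) = Φ (t i) (v - p v) := by
        rw [hq0]; simp [hbt]
      rw [LinearMap.sub_apply, map_sub Φ, LinearMap.sub_apply, h1, hsymm (t i)]
      simp
  have hr : ∀ v, (r v : V) = v - p v - q v := fun v => rfl
  have hdec : ∀ v, v = p v + q v + r v := fun v => by rw [hr]; abel
  -- the correction `a` and the map `A`
  let a : V →ₗ[ℚ] V := - ∑ i, (Φ (s i)).smulRight (Mb i)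
  have ha : ∀ w, a w = - ∑ i, Φ (s i) w • Mb i := fun w => by simp [a]
  have haU : ∀ w, a w ∈ U := fun w => by
    rw [ha]; exact U.neg_mem (U.sum_mem fun i _ => U.smul_mem _ (hMbU i))
  have hsa : ∀ i w, Φ (s i) (a w) = - Φ (s i) w := by
    intro i w
    rw [ha]; simp [hsMb]
  let T : V →ₗ[ℚ] V := ∑ i, (Φ (b i)).smulRight (s i)
  have hT : ∀ v, T v = ∑ i, Φ (b i) v • s i := fun v => by simp [T]
  let G : V →ₗ[ℚ] V := (LinearMap.id + a).comp (Wt.subtype.comp (γ.toLinearMap.comp r))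
  have hG : ∀ v, G v = γ (r v) + a (γ (r v)) := fun v => by simp [G]
  let A0 : V →ₗ[ℚ] V := T + U.subtype.comp (M.toLinearMap.comp q) + G
  have hA0 : ∀ v, A0 v = T v + M (q v) + G v := fun v => by simp [A0]
  have hTT : ∀ v w, Φ (T v) (T w) = Φ (p v) (p w) := by
    intro v w
    simp only [hT, hp, map_sum, map_smul, LinearMap.sum_apply, LinearMap.smul_apply, hss]
  have hTM : ∀ v (u : U), Φ (T v) (M u : V) = Φ (p v) u := by
    intro v u
    simp only [hT, hp, map_sum, map_smul, LinearMap.sum_apply, LinearMap.smul_apply, hsM]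
  have hTG : ∀ v w, Φ (T v) (G w) = 0 := by
    intro v w
    simp only [hT, map_sum, map_smul, LinearMap.sum_apply, LinearMap.smul_apply, hG, map_add, hsa]
    simp
  have hGU : ∀ v, ∀ u ∈ U, Φ (G v) u = 0 := by
    intro v u hu
    rw [hG, map_add, LinearMap.add_apply, hWU _ (γ (r v)).2 u hu, hUiso _ (haU _) u hu, add_zero]
  have hGG : ∀ v w, Φ (G v) (G w) = Φ (r v : V) (r w : V) := by
    intro v w
    rw [hG w, map_add, hGU v _ (haU _), hG, map_add, LinearMap.add_apply,
      hsymm (a _), hWU _ (γ (r w)).2 _ (haU _), hγiso]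
    ring
  have hpr : ∀ v, ∀ w ∈ Wt, Φ (p v) w = 0 := by
    intro v w hw
    rw [hp]
    simp [hsymm (t _) w, hWt' w hw]
  have hAiso : ∀ v w, Φ (A0 v) (A0 w) = Φ v w := by
    intro v w
    conv_rhs => rw [hdec v, hdec w]
    simp only [hA0, map_add, LinearMap.add_apply]
    rw [hTT, hTM, hTG, hsymm _ (T w), hTM, hUiso _ (M (q v)).2 _ (M (q w)).2,
      hsymm _ (G w), hGU w _ (M (q v)).2, hsymm (G v) (T w), hTG, hGU v _ (M (q w)).2, hGG,
      hpr v _ (r w).2, hsymm (q v : V) (p w), hUiso _ (q v).2 _ (q w).2,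
      hsymm (q v : V) (r w), hWU _ (r w).2 _ (q v).2, hsymm (r v : V) (p w), hpr w _ (r v).2,
      hWU _ (r v).2 _ (q w).2]
  have hAinj : Function.Injective A0 := by
    rw [← LinearMap.ker_eq_bot, LinearMap.ker_eq_bot']
    intro v hv
    apply hnd
    intro w
    rw [← hAiso, hv]; simp
  let A : V ≃ₗ[ℚ] V := LinearEquiv.ofInjectiveEndo A0 hAinj
  have hA : ∀ v, A v = A0 v := fun v => rfl
  have hAM : ∀ x : U, A0 (x : V) = (M x : V) := by
    intro x
    have hb0 : ∀ i, Φ (b i) (x : V) = 0 := fun i => hUiso _ (hbU i) _ x.2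
    have hp0 : p (x : V) = 0 := by rw [hp]; simp [hb0]
    have hT0 : T (x : V) = 0 := by rw [hT]; simp [hb0]
    have hqx : q (x : V) = x := by
      apply Subtype.ext
      rw [hq, hp0, sub_zero, ← hexpU _ x.2]
    have hrx : r (x : V) = 0 := by
      apply Subtype.ext
      rw [hr, hp0, hqx]; simp
    rw [hA0, hT0, hqx, hG, hrx]
    simp
  have hAγ : ∀ w : Wt, A0 (w : V) - (γ w : V) ∈ U := by
    intro w
    have hb0 : ∀ i, Φ (b i) (w : V) = 0 := fun i => by rw [hsymm]; exact hWU _ w.2 _ (hbU i)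
    have ht0 : ∀ i, Φ (t i) (w : V) = 0 := fun i => by rw [hsymm]; exact hWt' _ w.2 i
    have hp0 : p (w : V) = 0 := by rw [hp]; simp [hb0]
    have hT0 : T (w : V) = 0 := by rw [hT]; simp [hb0]
    have hqx : q (w : V) = 0 := by
      apply Subtype.ext
      rw [hq, hp0, sub_zero]; simp [ht0]
    have hrx : r (w : V) = w := by
      apply Subtype.ext
      rw [hr, hp0, hqx]; simp
    rw [hA0, hT0, hqx, hG, hrx]
    simpa using haU _
  have hstar : ∀ μ ∈ dualL Φ L, A0 μ - μ ∈ L := by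
    intro μ hμ
    choose x hx using fun i => hμ (b i) (hIL _ (hbI i))
    have hx' : ∀ i, Φ (b i) μ = x i := fun i => by rw [hsymm, hx]
    have hTp : T μ - p μ = ∑ i, x i • ν i := by
      rw [hT, hp, ← Finset.sum_sub_distrib]
      refine Finset.sum_congr rfl fun i _ => ?_
      rw [← smul_sub, hx', Int.cast_smul_eq_zsmul]
      simp [s]
    have hpI : p μ ∈ It := by
      rw [hp]
      refine It.sum_mem fun i _ => ?_
      rw [hx', Int.cast_smul_eq_zsmul]
      exact It.smul_mem _ (htI i)
    have hw : (γ (r μ) : V) - r μ ∈ L := by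
      refine (hγstar (r μ) ⟨(r μ).2, fun z hz hzW => ?_⟩).1
      obtain ⟨k, hk⟩ := hμ z hz
      refine ⟨k, ?_⟩
      rw [← hk]
      conv_rhs => rw [hdec μ]
      simp only [map_add, LinearMap.add_apply]
      rw [hpr μ z hzW, hsymm (q μ : V) z, hWU z hzW _ (q μ).2]
      ring
    have hzI : (M (q μ) : V) - q μ + a (γ (r μ)) ∈ I := by
      obtain ⟨u', hu'⟩ : ∃ u' : U, (M u' : V) = (M (q μ) : V) - q μ + a (γ (r μ)) := by
        refine ⟨M.symm (M (q μ) - q μ + ⟨_, haU (γ (r μ))⟩), ?_⟩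
        rw [LinearEquiv.apply_symm_apply]
        rfl
      rw [← hu', ← hMI]
      rw [hexpU _ u'.2]
      refine I.sum_mem fun i _ => ?_
      obtain ⟨k1, hk1⟩ := hLL _ (hνL i) _ hw
      obtain ⟨k2, hk2⟩ := hμ _ (hνL i)
      obtain ⟨k3, hk3⟩ := hItdual hpI _ (hνL i)
      have hk : Φ (t i) u' = ((-k1 - (k2 - k3) : ℤ) : ℚ) := by
        rw [← hsM, hu', map_add, map_sub, hsM, hsa]
        have e1 : Φ (s i) (q μ : V) = Φ (t i) (q μ : V) + Φ (ν i) (q μ : V) := by simp [s]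
        have e2 : Φ (s i) (γ (r μ) : V) = Φ (ν i) (γ (r μ) : V) := by
          simp [s, hsymm (t i), hWt' _ (γ (r μ)).2]
        have e3 : Φ (ν i) μ = Φ (ν i) (p μ) + Φ (ν i) (q μ : V) + Φ (ν i) (r μ : V) := by
          conv_lhs => rw [hdec μ]
          simp only [map_add]
        rw [map_sub] at hk1
        rw [hsymm] at hk2 hk3
        rw [e1, e2]
        push_cast
        linarith
      rw [hk, Int.cast_smul_eq_zsmul]
      exact I.smul_mem _ (hbI i)
    have hfin : A0 μ - μ = (T μ - p μ) + ((M (q μ) : V) - q μ + a (γ (r μ)))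
        + ((γ (r μ) : V) - r μ) := by
      conv_lhs => rw [hA0, hG]
      conv_lhs => enter [2]; rw [hdec μ]
      abel
    rw [hfin, hTp]
    exact L.add_mem (L.add_mem (L.sum_mem fun i _ => L.smul_mem _ (hνL i)) (hIL _ hzI)) hw
  have hALL : ∀ x ∈ L, A0 x ∈ L := by
    intro x hx
    have := L.add_mem (hstar x (hLL x hx)) hx
    simpa using this
  refine ⟨A, hAiso, fun x => ⟨hALL x, fun hx => ?_⟩, hstar, fun x => ⟨fun hx => ?_, fun hx => ?_⟩,
    hAM, hAγ⟩
  · rw [hA] at hx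
    have hxd : x ∈ dualL Φ L := by
      intro z hz
      obtain ⟨k, hk⟩ := hLL _ hx _ (hALL z hz)
      exact ⟨k, by rw [← hk, hAiso]⟩
    have := L.sub_mem hx (hstar x hxd)
    simpa using this
  · rw [hA, hAM ⟨x, hx⟩]
    exact (M ⟨x, hx⟩).2
  · rw [hA] at hx
    have h1 := hAM (M.symm ⟨A0 x, hx⟩)
    rw [LinearEquiv.apply_symm_apply] at h1
    have h2 := hAinj h1
    rw [← h2]
    exact (M.symm ⟨A0 x, hx⟩).2
end
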